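/- arXiv:1412.1793 — 2 statements merged into one kernel-verified Lean document; each statement's English description precedes it below -/
import Mathlib

section
/- Let G be a graph of distance VC-dimension at most d and let A, B be an independent pair in G. If no subpair of A, B of size 2^{d+1} satisfies the escape property, then the size of A, B is at most r_{2^{2^{d+2}}}(2^{d+1}), where r_k(n) denotes a multicolor Ramsey bound: every complete graph on more than r_k(n) vertices whose edges are colored with k colors contains a monochromatic clique of size n. -/
open SimpleGraph

variable {V : Type*}

/-- The ball of center `v` and radius `k` in a graph. -/
def gball (G : SimpleGraph V) (v : V) (k : ℕ) : Set V :=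
  {w | G.edist v w ≤ (k : ℕ∞)}

/-- `p` precedes or equals `q` in the lexicographic order on walks induced by a total order on
edges, where the edge lists are compared from the last edge to the first. -/
def WalkLexLE [LinearOrder (Sym2 V)] (G : SimpleGraph V) {x z : V} (p q : G.Walk x z) : Prop :=
  p.edges.reverse = q.edges.reverse ∨ List.Lex (· < ·) p.edges.reverse q.edges.reverse

/-- `p` is the minimum `xz`-path: a path of minimum length which, among the paths of minimum
length, has minimum lexicographic order. -/
def IsMinPath [LinearOrder (Sym2 V)] (G : SimpleGraph V) {x z : V} (p : G.Walk x z) : Prop :=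
  p.IsPath ∧ (∀ q : G.Walk x z, p.length ≤ q.length) ∧
    ∀ q : G.Walk x z, q.IsPath → q.length = p.length → WalkLexLE G p q

/-- `P a b` is the support (vertex list) of the minimum `ab`-path `P_{ab}`, for all
`(a, b) ∈ A × B`. -/
def IsMinPathFamily [LinearOrder (Sym2 V)] (G : SimpleGraph V) (A B : Finset V)
    (P : V → V → List V) : Prop :=
  ∀ a ∈ A, ∀ b ∈ B, ∃ w : G.Walk a b, IsMinPath G w ∧ w.support = P a b

/-- The critical vertex `c_{ab}`: the vertex of `P_{ab}` at distance `ℓ - 3` from `a`. -/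
def critA (ℓ : ℕ) (P : V → V → List V) (a b : V) : V :=
  (P a b).getD (ℓ - 3) a

/-- The pre-critical vertex `c⁻_{ab}`: the vertex of `P_{ab}` at distance `ℓ - 4` from `a`. -/
def precritA (ℓ : ℕ) (P : V → V → List V) (a b : V) : V :=
  (P a b).getD (ℓ - 4) a

/-- The critical vertex `c_{ba}`: the vertex of `P_{ab}` at distance `ℓ - 3` from `b`. -/
def critB (ℓ : ℕ) (P : V → V → List V) (a b : V) : V :=
  (P a b).getD ((P a b).length - (ℓ - 2)) a

/-- The pair `A, B` is `d`-localized: `A` and `B` are disjoint, the vertices of `A ∪ B` are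
pairwise at distance at least `ℓ + 1`, and `d(a,b) ≤ 2ℓ - 2^{d+2} - 3` for all
`(a, b) ∈ A × B`. -/
def DLocalizedPair (G : SimpleGraph V) (ℓ d : ℕ) (A B : Finset V) : Prop :=
  Disjoint A B ∧
  (∀ u ∈ (A : Set V) ∪ (B : Set V), ∀ v ∈ (A : Set V) ∪ (B : Set V), u ≠ v → (ℓ : ℕ∞) + 1 ≤ G.edist u v) ∧
  (∀ a ∈ A, ∀ b ∈ B, G.edist a b + 2 ^ (d + 2) + 3 ≤ 2 * (ℓ : ℕ∞))

/-- The `d`-localized pair `A, B` is independent: for every `(a, b) ∈ A × B`,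
`B(c_{ab}, ℓ) ∩ (A ∪ B) = {a, b}` and `B(c_{ba}, ℓ) ∩ (A ∪ B) = {a, b}`. -/
def IndependentPair (G : SimpleGraph V) (ℓ d : ℕ) (A B : Finset V)
    (P : V → V → List V) : Prop :=
  DLocalizedPair G ℓ d A B ∧
  ∀ a ∈ A, ∀ b ∈ B,
    gball G (critA ℓ P a b) ℓ ∩ ((A : Set V) ∪ (B : Set V)) = {a, b} ∧
    gball G (critB ℓ P a b) ℓ ∩ ((A : Set V) ∪ (B : Set V)) = {a, b}

/-- The root section `RS(a)` of `a ∈ A`: union over `b ∈ B` of the vertices of the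
`a`–`c_{ab}` subpaths of `P_{ab}`. -/
def RSA (ℓ : ℕ) (B : Finset V) (P : V → V → List V) (a : V) : Set V :=
  {v | ∃ b ∈ B, v ∈ (P a b).take (ℓ - 2)}

/-- The root section `RS(b)` of `b ∈ B`: union over `a ∈ A` of the vertices of the
`c_{ba}`–`b` subpaths of `P_{ab}`. -/
def RSB (ℓ : ℕ) (A : Finset V) (P : V → V → List V) (b : V) : Set V :=
  {v | ∃ a ∈ A, v ∈ (P a b).drop ((P a b).length - (ℓ - 2))}

/-- `uv` is an edge of the path whose vertex list is `l`: `u` and `v` are consecutive in `l`. -/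
def IsEdgeOfList (l : List V) (u v : V) : Prop :=
  ∃ i : ℕ, (l[i]? = some u ∧ l[i + 1]? = some v) ∨ (l[i]? = some v ∧ l[i + 1]? = some u)

/-- `uv` is an escape from `a`: an edge with `u ∈ RS(a)`, `v ∉ RS(a)` which is not an edge of
any path `P_{ab}`, `b ∈ B`. -/
def IsEscape (G : SimpleGraph V) (ℓ : ℕ) (B : Finset V) (P : V → V → List V)
    (a u v : V) : Prop :=
  G.Adj u v ∧ u ∈ RSA ℓ B P a ∧ v ∉ RSA ℓ B P a ∧ ∀ b ∈ B, ¬ IsEdgeOfList (P a b) u v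

/-- `uv` is an escape from `a` to `a'` for `b`: an escape from `a` whose end `v` lies on
`P_{a'b}`, with `a' ≠ a`. -/
def IsEscapeTo (G : SimpleGraph V) (ℓ : ℕ) (B : Finset V) (P : V → V → List V)
    (a a' b u v : V) : Prop :=
  IsEscape G ℓ B P a u v ∧ a' ≠ a ∧ v ∈ P a' b

/-- Arc `a → a'` of the escape graph of `b`: there is an escape from `a` to `a'` for `b`. -/
def EscapeArc (G : SimpleGraph V) (ℓ : ℕ) (A B : Finset V) (P : V → V → List V)
    (b a a' : V) : Prop :=
  a ∈ A ∧ a' ∈ A ∧ ∃ u v, IsEscapeTo G ℓ B P a a' b u v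

/-- `uv` is a deep escape from `a`: an escape whose beginning `u` is neither a critical vertex
nor a pre-critical vertex. -/
def IsDeepEscape (G : SimpleGraph V) (ℓ : ℕ) (A B : Finset V) (P : V → V → List V)
    (a u v : V) : Prop :=
  IsEscape G ℓ B P a u v ∧
  ∀ a'' ∈ A, ∀ b'' ∈ B, u ≠ critA ℓ P a'' b'' ∧ u ≠ precritA ℓ P a'' b''

/-- Arc `a → a'` of the deep escape graph of `b`: there is a deep escape from `a` to `a'`
for `b`. -/
def DeepEscapeArc (G : SimpleGraph V) (ℓ : ℕ) (A B : Finset V) (P : V → V → List V)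
    (b a a' : V) : Prop :=
  a ∈ A ∧ a' ∈ A ∧ ∃ u v, IsDeepEscape G ℓ A B P a u v ∧ a' ≠ a ∧ v ∈ P a' b

/-- The pair `A, B` has the escape property: for every `b ∈ B`, the deep escape graph of `b` is
a transitive tournament on `A`. -/
def EscapeProperty (G : SimpleGraph V) (ℓ : ℕ) (A B : Finset V)
    (P : V → V → List V) : Prop :=
  ∀ b ∈ B,
    (∀ a ∈ A, ∀ a' ∈ A, a ≠ a' →
      (DeepEscapeArc G ℓ A B P b a a' ∨ DeepEscapeArc G ℓ A B P b a' a) ∧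
      ¬ (DeepEscapeArc G ℓ A B P b a a' ∧ DeepEscapeArc G ℓ A B P b a' a)) ∧
    (∀ a ∈ A, ∀ a' ∈ A, ∀ a'' ∈ A, DeepEscapeArc G ℓ A B P b a a' →
      DeepEscapeArc G ℓ A B P b a' a'' → DeepEscapeArc G ℓ A B P b a a'')

/-- `X` is shattered by the B-hypergraph of `G` (hyperedges: all balls of all radii). -/
def BShattered (G : SimpleGraph V) (X : Set V) : Prop :=
  ∀ Y ⊆ X, ∃ (v : V) (k : ℕ), gball G v k ∩ X = Y

/-- The distance VC-dimension of `G` is at most `d`. -/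
def distVCdimLE (G : SimpleGraph V) (d : ℕ) : Prop :=
  ∀ (S : Set V) (X : Set S), BShattered (SimpleGraph.induce S G) X → X.ncard ≤ d

/-!
Call `a → a'` a deep arc for `b` if an edge joins `P_{ab}`, strictly before its pre-critical
vertex, to a vertex of `P_{a'b}` outside `P_{ab}`. Independence forces every edge that leaves the
root section of `a` towards a path `P_{a'b'}` to start on `P_{ab'}`, so the arcs of the deep escape
graph of `b` in any subpair are the deep arcs for `b`. Such an arc strictly increases the distance
to `b`, hence the escape property holds as soon as any two vertices of `A` are joined by a deep arc
for every `b`.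

Fix `2^{d+1} + d` vertices `b` and color each pair of vertices of `A` by the set of those `b` for
which a deep arc joins them. On a monochromatic `A'` of size `2^{d+1}`, either `2^{d+1}` vertices
`b` see a clique and the subpair has the escape property, or a set `X` of `d + 1` vertices `b` see
no deep arc at all. In the latter case assign injectively a vertex of `A'` to every subset `Y` of
`X` and keep the paths joining it to `Y`: in the subgraph induced by their union, reaching `X \ Y`
from this vertex takes more than `2ℓ - 5` steps, so the balls of radius `2ℓ - 5` shatter `X`,
contradicting the bound on the VC-dimension.
-/

/-- `r` is an upper bound for the multicolor Ramsey number `r_k(n)`: every coloring with `k` colors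
of the edges of a complete graph on more than `r` vertices has a monochromatic clique of size
`n`. -/
def IsRamseyBound (k n r : ℕ) : Prop :=
  ∀ (W : Type) (_ : Fintype W), r < Fintype.card W → ∀ col : Sym2 W → Fin k,
    ∃ (S : Finset W) (c : Fin k), S.card = n ∧ ∀ u ∈ S, ∀ v ∈ S, u ≠ v → col s(u, v) = c

namespace IsRamseyBound

variable {k n r : ℕ} {ι W : Type*}

theorem exists_forall_isClique_or_isIndepSet (hr : IsRamseyBound k n r) (H : ι → SimpleGraph W)
    {A : Finset W} {B : Finset ι} (hA : r < A.card) (hB : 2 ^ B.card ≤ k) :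
    ∃ S ⊆ A, S.card = n ∧ ∀ i ∈ B, (H i).IsClique S ∨ (H i).IsIndepSet S := by
  classical
  obtain ⟨color⟩ : Nonempty (Finset B ↪ Fin k) :=
    Function.Embedding.nonempty_of_card_le (by simpa using hB)
  let f : Fin A.card ↪ W := A.equivFin.symm.toEmbedding.trans (Function.Embedding.subtype _)
  obtain ⟨T, c, hT, hc⟩ := hr (Fin A.card) inferInstance (by simpa using hA)
    fun e ↦ color {i | e.map f ∈ (H i).edgeSet}
  have adj_iff {u v u' v'} (hu : u ∈ T) (hv : v ∈ T) (huv : u ≠ v) (hu' : u' ∈ T) (hv' : v' ∈ T)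
      (huv' : u' ≠ v') {i} (hi : i ∈ B) : (H i).Adj (f u) (f v) ↔ (H i).Adj (f u') (f v') := by
    have hcolor := color.injective ((hc u hu v hv huv).trans (hc u' hu' v' hv' huv').symm)
    simpa using Finset.ext_iff.1 hcolor ⟨i, hi⟩
  refine ⟨T.map f, ?_, by rw [Finset.card_map, hT], fun i hi ↦ ?_⟩
  · intro x hx
    obtain ⟨u, -, rfl⟩ := Finset.mem_map.1 hx
    exact (A.equivFin.symm u).2
  · rw [Finset.coe_map, isIndepSet_iff, isClique_iff, f.injective.injOn.pairwise_image,
      f.injective.injOn.pairwise_image, or_iff_not_imp_right]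
    intro hindep u hu v hv huv
    simp only [Set.Pairwise, not_forall, not_not] at hindep
    obtain ⟨u', hu', v', hv', huv', hadj⟩ := hindep
    exact (adj_iff hu hv huv hu' hv' huv' hi).2 hadj

theorem exists_isClique_or_isIndepSet (hr : IsRamseyBound k n r) (H : ι → SimpleGraph W)
    {A : Finset W} {B : Finset ι} {p q : ℕ} (hA : r < A.card) (hB : p + q ≤ B.card)
    (hk : 2 ^ (p + q) ≤ k) :
    ∃ S ⊆ A, S.card = n ∧
      ((∃ K ⊆ B, K.card = p ∧ ∀ i ∈ K, (H i).IsClique S) ∨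
        ∃ X ⊆ B, X.card = q + 1 ∧ ∀ i ∈ X, (H i).IsIndepSet S) := by
  classical
  obtain ⟨C, hCB, hC⟩ := Finset.exists_subset_card_eq hB
  obtain ⟨S, hSA, hS, hor⟩ := hr.exists_forall_isClique_or_isIndepSet H hA (hC ▸ hk)
  refine ⟨S, hSA, hS, ?_⟩
  have hsum := C.card_filter_add_card_filter_not fun i ↦ (H i).IsClique S
  by_cases hp : p ≤ (C.filter fun i ↦ (H i).IsClique S).card
  · obtain ⟨K, hK, hKp⟩ := Finset.exists_subset_card_eq hp
    exact .inl ⟨K, hK.trans ((C.filter_subset _).trans hCB), hKp,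
      fun i hi ↦ (Finset.mem_filter.1 (hK hi)).2⟩
  · have hq : q + 1 ≤ (C.filter fun i ↦ ¬ (H i).IsClique S).card := by lia
    obtain ⟨X, hX, hXq⟩ := Finset.exists_subset_card_eq hq
    refine .inr ⟨X, hX.trans ((C.filter_subset _).trans hCB), hXq, fun i hi ↦ ?_⟩
    obtain ⟨hiC, hclique⟩ := Finset.mem_filter.1 (hX hi)
    exact (hor i hiC).resolve_left hclique

theorem le_add_one (hr : IsRamseyBound k n r) (hk : 1 ≤ k) : n ≤ r + 1 := by
  obtain ⟨S, -, hS, -⟩ := hr.exists_forall_isClique_or_isIndepSet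
    (fun _ : Unit ↦ (⊥ : SimpleGraph (Fin (r + 1)))) (A := .univ) (B := ∅) (by simp)
    (by simpa using hk)
  simpa [hS] using S.card_le_univ

/-- Three vertices `x, y, z` are neither a clique nor an independent set in the star with center
`x`, so a coloring that separates the `m` stars on `m` vertices has no monochromatic triangle. -/
theorem le_of_two_lt {m : ℕ} (hr : IsRamseyBound k n r) (hn : 2 < n) (hk : 2 ^ m ≤ k) :
    m ≤ r := by
  by_contra! hrm
  let star (x : Fin m) : SimpleGraph (Fin m) := .fromRel fun u _ ↦ u = x
  obtain ⟨S, -, hS, hor⟩ := hr.exists_forall_isClique_or_isIndepSet star (A := .univ) (B := .univ)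
    (by simpa using hrm) (by simpa using hk)
  obtain ⟨x, y, z, hx, hy, hz, hxy, hxz, hyz⟩ := Finset.two_lt_card_iff.1 (hS ▸ hn)
  rcases hor x (Finset.mem_univ x) with hclique | hindep
  · rcases (hclique hy hz hyz).2 with rfl | rfl
    · exact hxy rfl
    · exact hxz rfl
  · exact hindep hx hy hxy ⟨hxy, .inl rfl⟩

theorem two_pow_succ_add_le {d : ℕ} (hr : IsRamseyBound k (2 ^ (d + 1)) r)
    (hk : 2 ^ (2 ^ (d + 1) + d) ≤ k) : 2 ^ (d + 1) + d ≤ r + 1 := by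
  rcases d.eq_zero_or_pos with rfl | hd
  · exact hr.le_add_one (Nat.one_le_two_pow.trans hk)
  · have htwo : 2 < 2 ^ (d + 1) := lt_self_pow₀ one_lt_two (by lia)
    exact (hr.le_of_two_lt htwo hk).trans r.le_succ

end IsRamseyBound

theorem edist_induce_le_iff {G : SimpleGraph V} {H : Set V} {v x : H} {k : ℕ} :
    (G.induce H).edist v x ≤ k ↔
      ∃ w : G.Walk v x, (∀ y ∈ w.support, y ∈ H) ∧ w.length ≤ k := by
  constructor
  · intro hk
    obtain ⟨w, hw⟩ := exists_walk_of_edist_ne_top (ne_top_of_le_ne_top (ENat.natCast_ne_top k) hk)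
    refine ⟨w.map (Embedding.induce H).toHom, fun y hy ↦ ?_, (w.length_map _).trans_le ?_⟩
    · obtain ⟨u, -, rfl⟩ := List.mem_map.1 ((w.support_map _) ▸ hy)
      exact u.2
    · exact_mod_cast hw.trans_le hk
  · rintro ⟨w, hwH, hw⟩
    have hlength := congrArg Walk.length (w.map_induce hwH)
    rw [Walk.length_map] at hlength
    exact (w.induce H hwH).edist_le.trans (by exact_mod_cast hlength.trans_le hw)

theorem distVCdimLE.card_le {G : SimpleGraph V} {d : ℕ} (hvc : distVCdimLE G d) {H : Set V}
    {X : Finset V} (hXH : (X : Set V) ⊆ H) (hHX : (H \ X).Nonempty)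
    (hball : ∀ Y ⊆ X, Y.Nonempty → ∃ v ∈ H, ∃ k : ℕ, ∀ x ∈ X,
      (∃ w : G.Walk v x, (∀ y ∈ w.support, y ∈ H) ∧ w.length ≤ k) ↔ x ∈ Y) :
    X.card ≤ d := by
  classical
  have hshattered : BShattered (G.induce H) (Subtype.val ⁻¹' (X : Set V)) := by
    intro Y hYX
    rcases Y.eq_empty_or_nonempty with rfl | ⟨y, hy⟩
    · obtain ⟨v, hvH, hvX⟩ := hHX
      refine ⟨⟨v, hvH⟩, 0, Set.eq_empty_of_forall_notMem fun x ⟨hvx, hx⟩ ↦ hvX ?_⟩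
      obtain rfl : (⟨v, hvH⟩ : H) = x := edist_eq_zero_iff.1 (nonpos_iff_eq_zero.1 hvx)
      exact hx
    · let Z : Finset V := {x ∈ X | x ∈ Subtype.val '' Y}
      have mem_Z {x : H} : x.1 ∈ Z ↔ x ∈ Y := by
        simpa [Z] using fun hx ↦ hYX hx
      obtain ⟨v, hvH, k, hk⟩ := hball Z (X.filter_subset _) ⟨y, mem_Z.2 hy⟩
      refine ⟨⟨v, hvH⟩, k, Set.ext fun x ↦ ?_⟩
      refine ⟨fun ⟨hvx, hx⟩ ↦ mem_Z.1 ((hk x hx).1 (edist_induce_le_iff.1 hvx)), fun hx ↦ ?_⟩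
      exact ⟨edist_induce_le_iff.2 ((hk x (hYX hx)).2 (mem_Z.2 hx)), hYX hx⟩
  have hcard := hvc H _ hshattered
  rwa [Set.ncard_preimage_of_injective_subset_range Subtype.val_injective (by simpa using hXH),
    Set.ncard_coe_finset] at hcard

section Geodesics

variable {G : SimpleGraph V} {a b u v : V}

theorem dist_getVert_getVert_of_length_eq_dist {w : G.Walk a b} (hw : w.length = G.dist a b)
    {i j : ℕ} (hij : i ≤ j) (hj : j ≤ w.length) :
    G.dist (w.getVert i) (w.getVert j) = j - i := by
  have hsub := length_eq_dist_of_subwalk hw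
    (((w.drop i).isSubwalk_take (j - i)).trans (w.isSubwalk_drop i))
  rw [Walk.take_length, Walk.drop_length, Walk.drop_getVert, Nat.add_sub_cancel' hij] at hsub
  lia

theorem dist_getVert_of_length_eq_dist {w : G.Walk a b} (hw : w.length = G.dist a b)
    {i : ℕ} (hi : i ≤ w.length) : G.dist a (w.getVert i) = i := by
  simpa using dist_getVert_getVert_of_length_eq_dist hw i.zero_le hi

theorem dist_add_dist_of_length_eq_dist {w : G.Walk a b} (hw : w.length = G.dist a b)
    (hu : u ∈ w.support) (hv : v ∈ w.support) (huv : G.dist a u ≤ G.dist a v) :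
    G.dist a u + G.dist u v = G.dist a v := by
  obtain ⟨i, rfl, hi⟩ := Walk.mem_support_iff_exists_getVert.1 hu
  obtain ⟨j, rfl, hj⟩ := Walk.mem_support_iff_exists_getVert.1 hv
  rw [dist_getVert_of_length_eq_dist hw hi, dist_getVert_of_length_eq_dist hw hj] at huv ⊢
  rw [dist_getVert_getVert_of_length_eq_dist hw huv hj, Nat.add_sub_cancel' huv]

theorem support_getElem?_eq_some_iff_of_length_eq_dist {w : G.Walk a b}
    (hw : w.length = G.dist a b) {i : ℕ} :
    w.support[i]? = some u ↔ u ∈ w.support ∧ G.dist a u = i := by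
  constructor
  · intro hi
    have hlen : i ≤ w.length := by
      have := (List.getElem?_eq_some_iff.1 hi).1
      rw [w.length_support] at this
      lia
    obtain rfl : w.getVert i = u := by
      rwa [← w.getVert_eq_support_getElem? hlen, Option.some_inj] at hi
    exact ⟨w.getVert_mem_support i, dist_getVert_of_length_eq_dist hw hlen⟩
  · rintro ⟨hu, rfl⟩
    obtain ⟨i, rfl, hi⟩ := Walk.mem_support_iff_exists_getVert.1 hu
    rw [dist_getVert_of_length_eq_dist hw hi, w.getVert_eq_support_getElem? hi]

theorem dist_add_dist_le_length {w : G.Walk a b} (hu : u ∈ w.support) :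
    G.dist a u + G.dist u b ≤ w.length := by
  classical
  rw [← w.take_spec hu, Walk.length_append]
  exact add_le_add (dist_le _) (dist_le _)

theorem dist_le_dist_add_one_of_edist_le_one (huv : G.edist u v ≤ 1) :
    G.dist a v ≤ G.dist a u + 1 := by
  rcases edist_le_one_iff_adj_or_eq.1 huv with hadj | rfl
  · rcases hadj.diff_dist_adj (u := a) with h | h | h <;> lia
  · exact Nat.le_succ _

end Geodesics

theorem IsEdgeOfList.right_mem {l : List V} {u v : V} (h : IsEdgeOfList l u v) : v ∈ l := by
  obtain ⟨i, ⟨-, hv⟩ | ⟨hv, -⟩⟩ := h <;> exact List.mem_of_getElem? hv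

/-- Shortest paths from `A` to `B`, given by their vertex lists `P a b`, with the one-sided form of
independence: only the critical vertices `c_{ab}` on the side of `A` are constrained. An independent
pair enters the proof through this structure. -/
structure IndependentGeodesics (G : SimpleGraph V) (ℓ : ℕ) (A B : Finset V)
    (P : V → V → List V) : Prop where
  exists_walk : ∀ a ∈ A, ∀ b ∈ B, ∃ w : G.Walk a b, w.length = G.dist a b ∧ w.support = P a b
  lt_dist : ∀ a ∈ A, ∀ b ∈ B, ℓ < G.dist a b
  dist_add_five_le : ∀ a ∈ A, ∀ b ∈ B, G.dist a b + 5 ≤ 2 * ℓ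
  gball_critA_inter_subset : ∀ a ∈ A, ∀ b ∈ B,
    gball G (critA ℓ P a b) ℓ ∩ ((A : Set V) ∪ (B : Set V)) ⊆ {a, b}

theorem IndependentPair.independentGeodesics [LinearOrder (Sym2 V)] {G : SimpleGraph V} {ℓ d : ℕ}
    {A B : Finset V} {P : V → V → List V} (hind : IndependentPair G ℓ d A B P)
    (hP : IsMinPathFamily G A B P) : IndependentGeodesics G ℓ A B P := by
  obtain ⟨⟨hdisj, hfar, hnear⟩, hcrit⟩ := hind
  have exists_walk : ∀ a ∈ A, ∀ b ∈ B,
      ∃ w : G.Walk a b, w.length = G.dist a b ∧ w.support = P a b := by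
    intro a ha b hb
    obtain ⟨w, ⟨-, hmin, -⟩, hw⟩ := hP a ha b hb
    obtain ⟨q, hq⟩ := w.reachable.exists_walk_length_eq_dist
    exact ⟨w, (hq ▸ hmin q).antisymm (dist_le w), hw⟩
  have coe_dist : ∀ a ∈ A, ∀ b ∈ B, (G.dist a b : ℕ∞) = G.edist a b := fun a ha b hb ↦
    (exists_walk a ha b hb).choose.reachable.coe_dist_eq_edist
  refine ⟨exists_walk, fun a ha b hb ↦ ?_, fun a ha b hb ↦ ?_,
    fun a ha b hb ↦ (hcrit a ha b hb).1.subset⟩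
  · have hlt := hfar a (.inl ha) b (.inr hb) (Finset.disjoint_iff_ne.1 hdisj a ha b hb)
    rw [← coe_dist a ha b hb] at hlt
    exact_mod_cast hlt
  · have hle := hnear a ha b hb
    rw [← coe_dist a ha b hb] at hle
    have hle : G.dist a b + 2 ^ (d + 2) + 3 ≤ 2 * ℓ := by exact_mod_cast hle
    have hd : 1 ≤ 2 ^ d := Nat.one_le_two_pow
    lia

/-- A deep arc `a → a'` for `b`: an edge joins a vertex of `P_{ab}` strictly before the pre-critical
vertex to a vertex of `P_{a'b}` outside `P_{ab}`. This describes the arcs of the deep escape graph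
of `b` by the two paths alone, independently of the subpair in which that graph is taken. -/
def IsDeepArc (G : SimpleGraph V) (ℓ : ℕ) (P : V → V → List V) (b a a' : V) : Prop :=
  ∃ u v, G.Adj u v ∧ u ∈ P a b ∧ G.dist a u + 4 < ℓ ∧ v ∈ P a' b ∧ v ∉ P a b

/-- The undirected graph underlying the deep arcs for `b`; its edges define the coloring to which
the Ramsey bound is applied. -/
def deepArcGraph (G : SimpleGraph V) (ℓ : ℕ) (P : V → V → List V) (b : V) : SimpleGraph V :=
  .fromRel (IsDeepArc G ℓ P b)

theorem IsDeepArc.ne {G : SimpleGraph V} {ℓ : ℕ} {P : V → V → List V} {b a a' : V}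
    (h : IsDeepArc G ℓ P b a a') : a ≠ a' := by
  rintro rfl
  obtain ⟨u, v, -, -, -, hv, hvP⟩ := h
  exact hvP hv

namespace IndependentGeodesics

variable {G : SimpleGraph V} {ℓ : ℕ} {A B : Finset V} {P : V → V → List V}
  {a a' b b' u v : V}

theorem mono {A' B' : Finset V} (h : IndependentGeodesics G ℓ A B P) (hA : A' ⊆ A) (hB : B' ⊆ B) :
    IndependentGeodesics G ℓ A' B' P where
  exists_walk a ha b hb := h.exists_walk a (hA ha) b (hB hb)
  lt_dist a ha b hb := h.lt_dist a (hA ha) b (hB hb)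
  dist_add_five_le a ha b hb := h.dist_add_five_le a (hA ha) b (hB hb)
  gball_critA_inter_subset a ha b hb :=
    (Set.inter_subset_inter_right _ (Set.union_subset_union (Finset.coe_subset.2 hA)
      (Finset.coe_subset.2 hB))).trans (h.gball_critA_inter_subset a (hA ha) b (hB hb))

theorem six_le (h : IndependentGeodesics G ℓ A B P) (ha : a ∈ A) (hb : b ∈ B) : 6 ≤ ℓ := by
  have := h.lt_dist a ha b hb
  have := h.dist_add_five_le a ha b hb
  lia

theorem ne (h : IndependentGeodesics G ℓ A B P) (ha : a ∈ A) (hb : b ∈ B) : a ≠ b := by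
  rintro rfl
  simpa using h.lt_dist a ha a hb

theorem left_mem (h : IndependentGeodesics G ℓ A B P) (ha : a ∈ A) (hb : b ∈ B) : a ∈ P a b := by
  obtain ⟨w, -, hw⟩ := h.exists_walk a ha b hb
  exact hw ▸ w.start_mem_support

theorem right_mem (h : IndependentGeodesics G ℓ A B P) (ha : a ∈ A) (hb : b ∈ B) : b ∈ P a b := by
  obtain ⟨w, -, hw⟩ := h.exists_walk a ha b hb
  exact hw ▸ w.end_mem_support

theorem reachable (h : IndependentGeodesics G ℓ A B P) (ha : a ∈ A) (hb : b ∈ B)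
    (hu : u ∈ P a b) (hv : v ∈ P a b) : G.Reachable u v := by
  classical
  obtain ⟨w, -, hw⟩ := h.exists_walk a ha b hb
  rw [← hw] at hu hv
  exact (w.takeUntil u hu).reachable.symm.trans (w.takeUntil v hv).reachable

theorem reachable_of_mem_union (h : IndependentGeodesics G ℓ A B P) (ha : a ∈ A) (hb : b ∈ B)
    (hv : v ∈ P a b) {y : V} (hy : y ∈ (A : Set V) ∪ B) : G.Reachable y v := by
  have hav := h.reachable ha hb (h.left_mem ha hb) hv
  rcases hy with hyA | hyB
  · have hyb := h.reachable hyA hb (h.left_mem hyA hb) (h.right_mem hyA hb)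
    exact hyb.trans (h.reachable ha hb (h.right_mem ha hb) hv)
  · exact (h.reachable ha hyB (h.right_mem ha hyB) (h.left_mem ha hyB)).trans hav

theorem dist_add_dist (h : IndependentGeodesics G ℓ A B P) (ha : a ∈ A) (hb : b ∈ B)
    (hu : u ∈ P a b) (hv : v ∈ P a b) (huv : G.dist a u ≤ G.dist a v) :
    G.dist a u + G.dist u v = G.dist a v := by
  obtain ⟨w, hlen, hw⟩ := h.exists_walk a ha b hb
  rw [← hw] at hu hv
  exact dist_add_dist_of_length_eq_dist hlen hu hv huv

theorem dist_add_dist_right (h : IndependentGeodesics G ℓ A B P) (ha : a ∈ A) (hb : b ∈ B)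
    (hu : u ∈ P a b) : G.dist a u + G.dist u b = G.dist a b := by
  obtain ⟨w, hlen, hw⟩ := h.exists_walk a ha b hb
  refine ((dist_add_dist_le_length (hw ▸ hu)).trans hlen.le).antisymm ?_
  exact (h.reachable ha hb (h.left_mem ha hb) hu).dist_triangle_left b

theorem getElem?_eq_some_iff (h : IndependentGeodesics G ℓ A B P) (ha : a ∈ A) (hb : b ∈ B)
    {i : ℕ} : (P a b)[i]? = some u ↔ u ∈ P a b ∧ G.dist a u = i := by
  obtain ⟨w, hlen, hw⟩ := h.exists_walk a ha b hb
  rw [← hw]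
  exact support_getElem?_eq_some_iff_of_length_eq_dist hlen

theorem eq_getD_iff (h : IndependentGeodesics G ℓ A B P) (ha : a ∈ A) (hb : b ∈ B) {n : ℕ}
    (hn : n ≤ G.dist a b) : u = (P a b).getD n a ↔ u ∈ P a b ∧ G.dist a u = n := by
  obtain ⟨w, hlen, hw⟩ := h.exists_walk a ha b hb
  have hn' : n < (P a b).length := by rw [← hw, w.length_support]; lia
  rw [← h.getElem?_eq_some_iff ha hb, List.getD_eq_getElem _ _ hn', List.getElem?_eq_getElem hn',
    Option.some_inj, eq_comm]

theorem eq_critA_iff (h : IndependentGeodesics G ℓ A B P) (ha : a ∈ A) (hb : b ∈ B) :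
    u = critA ℓ P a b ↔ u ∈ P a b ∧ G.dist a u + 3 = ℓ := by
  have := h.six_le ha hb
  have := h.lt_dist a ha b hb
  rw [critA, h.eq_getD_iff ha hb (by lia)]
  exact and_congr_right fun _ ↦ by lia

theorem eq_precritA_iff (h : IndependentGeodesics G ℓ A B P) (ha : a ∈ A) (hb : b ∈ B) :
    u = precritA ℓ P a b ↔ u ∈ P a b ∧ G.dist a u + 4 = ℓ := by
  have := h.six_le ha hb
  have := h.lt_dist a ha b hb
  rw [precritA, h.eq_getD_iff ha hb (by lia)]
  exact and_congr_right fun _ ↦ by lia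

theorem mem_RSA_iff (h : IndependentGeodesics G ℓ A B P) (ha : a ∈ A) :
    v ∈ RSA ℓ B P a ↔ ∃ b ∈ B, v ∈ P a b ∧ G.dist a v + 3 ≤ ℓ := by
  refine exists_congr fun b ↦ and_congr_right fun hb ↦ ?_
  have := h.six_le ha hb
  rw [List.mem_iff_getElem?]
  simp only [List.getElem?_take, Option.ite_none_right_eq_some, h.getElem?_eq_some_iff ha hb]
  constructor
  · rintro ⟨i, hi, hv, rfl⟩
    exact ⟨hv, by lia⟩
  · rintro ⟨hv, hi⟩
    exact ⟨_, by lia, hv, rfl⟩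

theorem lt_dist_critA (h : IndependentGeodesics G ℓ A B P) (ha : a ∈ A) (hb : b ∈ B) {y : V}
    (hy : y ∈ (A : Set V) ∪ B) (hya : y ≠ a) (hyb : y ≠ b) :
    ℓ < G.dist y (critA ℓ P a b) := by
  by_contra! hle
  have hreach := h.reachable_of_mem_union ha hb ((h.eq_critA_iff ha hb).1 rfl).1 hy
  have hball : y ∈ gball G (critA ℓ P a b) ℓ := by
    rw [gball, Set.mem_ofPred_eq, edist_comm, ← hreach.coe_dist_eq_edist]
    exact_mod_cast hle
  rcases h.gball_critA_inter_subset a ha b hb ⟨hball, hy⟩ with hy | hy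
  exacts [hya hy, hyb hy]

theorem dist_add_three_lt_dist (h : IndependentGeodesics G ℓ A B P) (ha : a ∈ A) (hb : b ∈ B)
    (hv : v ∈ P a b) (hav : G.dist a v + 3 ≤ ℓ) {y : V} (hy : y ∈ (A : Set V) ∪ B) (hya : y ≠ a)
    (hyb : y ≠ b) : G.dist a v + 3 < G.dist y v := by
  obtain ⟨hc, hac⟩ := (h.eq_critA_iff ha hb).1 rfl
  have hvc := h.reachable ha hb hv hc
  have hlt := h.lt_dist_critA ha hb hy hya hyb
  have htri := hvc.dist_triangle_right y
  have hadd := h.dist_add_dist ha hb hv hc (by lia)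
  lia

theorem two_mul_lt_dist_add_dist (h : IndependentGeodesics G ℓ A B P) (ha : a ∈ A) (hb : b ∈ B)
    (hv : v ∈ P a b) (hav : ℓ ≤ G.dist a v + 3) {y : V} (hy : y ∈ (A : Set V) ∪ B) (hya : y ≠ a)
    (hyb : y ≠ b) : 2 * ℓ < G.dist y v + G.dist a v + 3 := by
  obtain ⟨hc, hac⟩ := (h.eq_critA_iff ha hb).1 rfl
  have hvc := h.reachable ha hb hv hc
  have hlt := h.lt_dist_critA ha hb hy hya hyb
  have htri := hvc.dist_triangle_right y
  have hadd := h.dist_add_dist ha hb hc hv (by lia)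
  rw [dist_comm (u := critA ℓ P a b)] at hadd
  lia

theorem le_dist_add_two_of_edist_le_one (h : IndependentGeodesics G ℓ A B P) (ha : a ∈ A)
    (ha' : a' ∈ A) (hne : a ≠ a') (hb : b ∈ B) (hb' : b' ∈ B) (hu : u ∈ P a b) (hv : v ∈ P a' b')
    (huv : G.edist u v ≤ 1) (hau : G.dist a u + 3 ≤ ℓ) : ℓ ≤ G.dist a' v + 2 := by
  by_contra! hav
  have hlt := h.dist_add_three_lt_dist ha' hb' hv hav (.inl ha) hne (h.ne ha hb')
  have hlt' := h.dist_add_three_lt_dist ha hb hu hau (.inl ha') hne.symm (h.ne ha' hb)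
  have hle := dist_le_dist_add_one_of_edist_le_one (a := a) huv
  have hle' := dist_le_dist_add_one_of_edist_le_one (a := a') (edist_comm.trans_le huv)
  lia

theorem eq_right_of_edist_le_one (h : IndependentGeodesics G ℓ A B P) (ha : a ∈ A) (ha' : a' ∈ A)
    (hne : a ≠ a') (hb : b ∈ B) (hb' : b' ∈ B) (hu : u ∈ P a b) (hv : v ∈ P a' b')
    (huv : G.edist u v ≤ 1) (hau : G.dist a u + 3 ≤ ℓ) : b' = b := by
  by_contra hbb
  have huv' : G.edist v u ≤ 1 := edist_comm.trans_le huv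
  have hav := h.le_dist_add_two_of_edist_le_one ha ha' hne hb hb' hu hv huv hau
  have hcrit' : 2 * ℓ < G.dist a v + G.dist a' v + 3 := h.two_mul_lt_dist_add_dist ha' hb' hv
    (by lia) (.inl ha) hne (h.ne ha hb')
  have hcrit : G.dist a u + 3 < G.dist b' u :=
    h.dist_add_three_lt_dist ha hb hu hau (.inr hb') (h.ne ha hb').symm hbb
  have hle := dist_le_dist_add_one_of_edist_le_one (a := a) huv
  have hle' := dist_le_dist_add_one_of_edist_le_one (a := b') huv'
  have hadd := h.dist_add_dist_right ha' hb' hv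
  have hlen := h.dist_add_five_le a' ha' b' hb'
  rw [dist_comm (u := v) (v := b')] at hadd
  lia

theorem dist_lt_dist_of_isDeepArc (h : IndependentGeodesics G ℓ A B P) (ha : a ∈ A) (ha' : a' ∈ A)
    (hb : b ∈ B) (hdeep : IsDeepArc G ℓ P b a a') : G.dist a b < G.dist a' b := by
  have hne := hdeep.ne
  obtain ⟨u, v, huv, hu, hau, hv, -⟩ := hdeep
  have hone : G.edist u v ≤ 1 := (edist_eq_one_iff_adj.2 huv).le
  have hav := h.le_dist_add_two_of_edist_le_one ha ha' hne hb hb hu hv hone (by lia)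
  have hle := dist_le_dist_add_one_of_edist_le_one (a := a) hone
  have htri := (h.reachable ha' hb hv (h.right_mem ha' hb)).dist_triangle_right a
  have hadd := h.dist_add_dist_right ha' hb hv
  lia

theorem isDeepArc_of_isDeepEscape (h : IndependentGeodesics G ℓ A B P) (ha : a ∈ A) (ha' : a' ∈ A)
    (hne : a ≠ a') (hb : b ∈ B) (huv : IsDeepEscape G ℓ A B P a u v) (hv : v ∈ P a' b) :
    IsDeepArc G ℓ P b a a' := by
  obtain ⟨⟨hadj, hu, hvR, -⟩, hdeep⟩ := huv
  obtain ⟨b₀, hb₀, hu, hau⟩ := (h.mem_RSA_iff ha).1 hu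
  have hone : G.edist u v ≤ 1 := (edist_eq_one_iff_adj.2 hadj).le
  obtain rfl := h.eq_right_of_edist_le_one ha ha' hne hb₀ hb hu hv hone hau
  have hcrit : G.dist a u + 3 ≠ ℓ := fun hc ↦
    (hdeep a ha b hb).1 ((h.eq_critA_iff ha hb).2 ⟨hu, hc⟩)
  have hprecrit : G.dist a u + 4 ≠ ℓ := fun hc ↦
    (hdeep a ha b hb).2 ((h.eq_precritA_iff ha hb).2 ⟨hu, hc⟩)
  refine ⟨u, v, hadj, hu, by lia, hv, fun hvP ↦ hvR ((h.mem_RSA_iff ha).2 ⟨b, hb, hvP, ?_⟩)⟩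
  have hle := dist_le_dist_add_one_of_edist_le_one (a := a) hone
  lia

theorem exists_isDeepEscape_of_isDeepArc (h : IndependentGeodesics G ℓ A B P) (ha : a ∈ A)
    (ha' : a' ∈ A) (hb : b ∈ B) (hdeep : IsDeepArc G ℓ P b a a') :
    ∃ u v, IsDeepEscape G ℓ A B P a u v ∧ v ∈ P a' b := by
  have hne := hdeep.ne
  obtain ⟨u, v, hadj, hu, hau, hv, hvP⟩ := hdeep
  have hle := dist_le_dist_add_one_of_edist_le_one (a := a) (edist_eq_one_iff_adj.2 hadj).le
  have eq_of_mem {b₀} (hb₀ : b₀ ∈ B) (hv₀ : v ∈ P a b₀) : b = b₀ :=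
    h.eq_right_of_edist_le_one ha ha' hne hb₀ hb hv₀ hv (by simp) (by lia)
  have notMem {b₀} (hb₀ : b₀ ∈ B) : v ∉ P a b₀ := fun hv₀ ↦ hvP (eq_of_mem hb₀ hv₀ ▸ hv₀)
  have notMem_RSA : v ∉ RSA ℓ B P a := by
    intro hvR
    obtain ⟨b₀, hb₀, hv₀, -⟩ := (h.mem_RSA_iff ha).1 hvR
    exact notMem hb₀ hv₀
  have lt_of_mem {a₀ b₀} (ha₀ : a₀ ∈ A) (hb₀ : b₀ ∈ B) (hu₀ : u ∈ P a₀ b₀) :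
      G.dist a₀ u + 4 < ℓ ∨ ℓ ≤ G.dist a₀ u + 2 := by
    by_cases haa : a = a₀
    · exact .inl (haa ▸ hau)
    · exact .inr (h.le_dist_add_two_of_edist_le_one ha ha₀ haa hb hb₀ hu hu₀ (by simp) (by lia))
  have isEscape : IsEscape G ℓ B P a u v := ⟨hadj, (h.mem_RSA_iff ha).2 ⟨b, hb, hu, by lia⟩,
    notMem_RSA, fun b₀ hb₀ hedge ↦ notMem hb₀ hedge.right_mem⟩
  refine ⟨u, v, ⟨isEscape, fun a₀ ha₀ b₀ hb₀ ↦ ⟨fun hc ↦ ?_, fun hc ↦ ?_⟩⟩, hv⟩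
  · obtain ⟨hu₀, hdist⟩ := (h.eq_critA_iff ha₀ hb₀).1 hc
    have := lt_of_mem ha₀ hb₀ hu₀
    lia
  · obtain ⟨hu₀, hdist⟩ := (h.eq_precritA_iff ha₀ hb₀).1 hc
    have := lt_of_mem ha₀ hb₀ hu₀
    lia

theorem deepEscapeArc_iff (h : IndependentGeodesics G ℓ A B P) (ha : a ∈ A) (ha' : a' ∈ A)
    (hb : b ∈ B) : DeepEscapeArc G ℓ A B P b a a' ↔ IsDeepArc G ℓ P b a a' := by
  constructor
  · rintro ⟨-, -, u, v, huv, hne, hv⟩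
    exact h.isDeepArc_of_isDeepEscape ha ha' hne.symm hb huv hv
  · intro hdeep
    obtain ⟨u, v, huv, hv⟩ := h.exists_isDeepEscape_of_isDeepArc ha ha' hb hdeep
    exact ⟨ha, ha', u, v, huv, hdeep.ne.symm, hv⟩

theorem escapeProperty_of_isClique (h : IndependentGeodesics G ℓ A B P)
    (hclique : ∀ b ∈ B, (deepArcGraph G ℓ P b).IsClique A) : EscapeProperty G ℓ A B P := by
  intro b hb
  have arc_iff {a a'} (ha : a ∈ A) (ha' : a' ∈ A) :
      DeepEscapeArc G ℓ A B P b a a' ↔ G.dist a b < G.dist a' b := by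
    rw [h.deepEscapeArc_iff ha ha' hb]
    refine ⟨h.dist_lt_dist_of_isDeepArc ha ha' hb, fun hlt ↦ ?_⟩
    have hne : a ≠ a' := by rintro rfl; exact hlt.false
    refine (hclique b hb ha ha' hne).2.resolve_right fun hdeep ↦ hlt.asymm ?_
    exact h.dist_lt_dist_of_isDeepArc ha' ha hb hdeep
  refine ⟨fun a ha a' ha' hne ↦ ⟨?_, ?_⟩, fun a ha a' ha' a'' ha'' ↦ ?_⟩
  · rw [h.deepEscapeArc_iff ha ha' hb, h.deepEscapeArc_iff ha' ha hb]
    exact (hclique b hb ha ha' hne).2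
  · rw [arc_iff ha ha', arc_iff ha' ha]
    exact fun ⟨hlt, hgt⟩ ↦ hlt.asymm hgt
  · rw [arc_iff ha ha', arc_iff ha' ha'', arc_iff ha ha'']
    exact lt_trans

theorem two_mul_lt_length_add_five (h : IndependentGeodesics G ℓ A B P)
    (hindep : ∀ b ∈ B, (deepArcGraph G ℓ P b).IsIndepSet A) {Y : Finset V} (hYB : Y ⊆ B)
    (hY : Y.Nonempty) (ha : a ∈ A) (hb : b ∈ B) (hbY : b ∉ Y) (w : G.Walk a b)
    (hw : ∀ v ∈ w.support, ∃ a' ∈ A, ∃ b' ∈ B, v ∈ P a' b' ∧ (a' = a → b' ∈ Y)) :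
    2 * ℓ < w.length + 5 := by
  by_contra! hlen
  have hR := h.mono subset_rfl hYB
  obtain ⟨y, hy⟩ := hY
  have haR : a ∈ RSA ℓ Y P a := by
    have := hR.six_le ha hy
    exact (hR.mem_RSA_iff ha).2 ⟨y, hy, hR.left_mem ha hy, by rw [dist_self]; lia⟩
  have hbR : b ∉ RSA ℓ Y P a := by
    intro hbR
    obtain ⟨-, -, -, hab⟩ := (hR.mem_RSA_iff ha).1 hbR
    have := h.lt_dist a ha b hb
    lia
  obtain ⟨⟨⟨u, v⟩, hadj⟩, huv, huR, hvR⟩ := w.exists_boundary_dart _ haR hbR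
  have hu := w.dart_fst_mem_support_of_mem_darts huv
  have hv := w.dart_snd_mem_support_of_mem_darts huv
  obtain ⟨b₀, hb₀, hu₀, hau⟩ := (hR.mem_RSA_iff ha).1 huR
  have hone : G.edist u v ≤ 1 := (edist_eq_one_iff_adj.2 hadj).le
  have hle := dist_le_dist_add_one_of_edist_le_one (a := a) hone
  have hdeep : G.dist a u + 4 < ℓ := by
    have hlt := h.dist_add_three_lt_dist ha (hYB hb₀) hu₀ hau (.inr hb) (h.ne ha hb).symm
      (ne_of_mem_of_not_mem hb₀ hbY).symm
    have hadd := dist_add_dist_le_length hu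
    rw [dist_comm (u := u)] at hadd
    lia
  obtain ⟨a', ha', b', hb', hv', hcond⟩ := hw v hv
  by_cases haa : a = a'
  · subst haa
    exact hvR ((hR.mem_RSA_iff ha).2 ⟨b', hcond rfl, hv', by lia⟩)
  · obtain rfl := h.eq_right_of_edist_le_one ha ha' haa (hYB hb₀) hb' hu₀ hv' hone hau
    have hvP : v ∉ P a b' := fun hvP ↦ hvR ((hR.mem_RSA_iff ha).2 ⟨b', hb₀, hvP, by lia⟩)
    exact hindep b' hb' ha ha' haa ⟨haa, .inl ⟨u, v, hadj, hu₀, hdeep, hv', hvP⟩⟩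

theorem card_le_of_isIndepSet {d : ℕ} (h : IndependentGeodesics G ℓ A B P)
    (hvc : distVCdimLE G d) (hBA : 2 ^ B.card ≤ A.card)
    (hindep : ∀ b ∈ B, (deepArcGraph G ℓ P b).IsIndepSet A) : B.card ≤ d := by
  obtain rfl | hB := B.eq_empty_or_nonempty
  · exact d.zero_le
  obtain ⟨f⟩ : Nonempty (B.powerset ↪ A) := Function.Embedding.nonempty_of_card_le (by simpa)
  let H : Set V := {v | ∃ Y : B.powerset, ∃ b ∈ Y.1, v ∈ P (f Y) b}
  have sub (Y : B.powerset) : Y.1 ⊆ B := Finset.mem_powerset.1 Y.2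
  have left_mem_H (Y : B.powerset) (hY : Y.1.Nonempty) : ↑(f Y) ∈ H := by
    obtain ⟨b, hb⟩ := hY
    exact ⟨Y, b, hb, h.left_mem (f Y).2 (sub Y hb)⟩
  let T : B.powerset := ⟨B, Finset.mem_powerset_self B⟩
  have hHB : (H \ B).Nonempty :=
    ⟨f T, left_mem_H T hB, fun hT ↦ h.ne (f T).2 (Finset.mem_coe.1 hT) rfl⟩
  have hBH : (B : Set V) ⊆ H := fun b hb ↦ ⟨T, b, hb, h.right_mem (f T).2 hb⟩
  refine hvc.card_le hBH hHB fun Y hYB hY ↦ ?_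
  let Z : B.powerset := ⟨Y, Finset.mem_powerset.2 hYB⟩
  refine ⟨f Z, left_mem_H Z hY, 2 * ℓ - 5, fun b hb ↦ ⟨fun ⟨w, hwH, hlen⟩ ↦ ?_, fun hbY ↦ ?_⟩⟩
  · by_contra hbY
    have hlt : 2 * ℓ < w.length + 5 := by
      refine h.two_mul_lt_length_add_five hindep hYB hY (f Z).2 hb hbY w fun v hv ↦ ?_
      obtain ⟨Y', b', hb', hv'⟩ := hwH v hv
      refine ⟨f Y', (f Y').2, b', sub Y' hb', hv', fun heq ↦ ?_⟩
      obtain rfl : Y' = Z := f.injective (Subtype.ext heq)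
      exact hb'
    have := h.six_le (f Z).2 hb
    lia
  · obtain ⟨w, hlen, hw⟩ := h.exists_walk _ (f Z).2 b hb
    refine ⟨w, fun v hv ↦ ⟨Z, b, hbY, hw ▸ hv⟩, ?_⟩
    have := h.dist_add_five_le _ (f Z).2 b hb
    lia

end IndependentGeodesics

theorem stmt16_general {d ℓ k r : ℕ} {G : SimpleGraph V} (hvc : distVCdimLE G d)
    {A B : Finset V} {P : V → V → List V} (h : IndependentGeodesics G ℓ A B P)
    (hk : 2 ^ (2 ^ (d + 1) + d) ≤ k) (hr : IsRamseyBound k (2 ^ (d + 1)) r)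
    (hnosub : ¬ ∃ A' B' : Finset V, A' ⊆ A ∧ B' ⊆ B ∧
      min A'.card B'.card = 2 ^ (d + 1) ∧ EscapeProperty G ℓ A' B' P) :
    min A.card B.card ≤ r := by
  by_contra! hlt
  obtain ⟨hA, hB⟩ := lt_min_iff.1 hlt
  obtain ⟨A', hA'A, hA', ⟨B', hB'B, hB', hclique⟩ | ⟨X, hXB, hX, hindep⟩⟩ :=
    hr.exists_isClique_or_isIndepSet (deepArcGraph G ℓ P) hA
      ((hr.two_pow_succ_add_le hk).trans hB) hk
  · exact hnosub ⟨A', B', hA'A, hB'B, by rw [hA', hB', min_self],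
      (h.mono hA'A hB'B).escapeProperty_of_isClique hclique⟩
  · have hcard := (h.mono hA'A hXB).card_le_of_isIndepSet hvc (by rw [hX, hA']) hindep
    lia

/-- Lemma `sgclique`: if `G` has distance VC-dimension at most `d` and the
independent pair `A, B` has no subpair of size `2^{d+1}` with the escape property, then the
size of `A, B` is at most the Ramsey bound `r` for `2^{2^{d+2}}` colors and monochromatic
cliques of size `2^{d+1}`. -/
theorem stmt16 (d ℓ : ℕ) {V : Type*} [Fintype V] [LinearOrder (Sym2 V)]
    (G : SimpleGraph V) (hvc : distVCdimLE G d)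
    (A B : Finset V) (P : V → V → List V)
    (hP : IsMinPathFamily G A B P)
    (hind : IndependentPair G ℓ d A B P)
    (r : ℕ)
    (hr : ∀ (W : Type) (_ : Fintype W), r < Fintype.card W →
      ∀ col : Sym2 W → Fin (2 ^ 2 ^ (d + 2)),
        ∃ (S : Finset W) (c : Fin (2 ^ 2 ^ (d + 2))), S.card = 2 ^ (d + 1) ∧
          ∀ u ∈ S, ∀ v ∈ S, u ≠ v → col s(u, v) = c)
    (hnosub : ¬ ∃ A' B' : Finset V, A' ⊆ A ∧ B' ⊆ B ∧
        min A'.card B'.card = 2 ^ (d + 1) ∧ EscapeProperty G ℓ A' B' P) :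
    min A.card B.card ≤ r := by
  have hk : 2 ^ (d + 1) + d ≤ 2 ^ (d + 2) := by have := d.lt_two_pow_self; lia
  exact stmt16_general hvc (hind.independentGeodesics hP) (Nat.pow_le_pow_right two_pos hk) hr
    hnosub
end

section
/- Let G be a graph of distance VC-dimension at most d. Every independent pair A, B in G that satisfies the escape property has size at most 2^{d+1} − 1. -/
open SimpleGraph

variable {V : Type*}

/-!
Suppose `|A| > d` and `|B| ≥ 2 ^ (d + 1)`, shrink `A` to `d + 1` vertices and index by the subsets
of `A` that many vertices of `B`. Let `S` be the union over all `b` of the paths `P_{ab}` with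
`a ∈ b`, each cut at the first vertex which touches the root section of another member of `b`. In
`G[S]`, an index `a ∈ b` reaches `b` with length at most `|P_{ab}| + 2d ≤ 2ℓ - 3`: at each cut, go
on along the touched path, which loses at most two units and happens at most `d` times, since
touched paths are shorter. If `a ∉ b`, the root section of `a`, together with the parts beyond
their root sections of the kept paths touching it, can only be left through a vertex `v` with
`d(a, v) + d(v, b) ≥ 2ℓ - 2`, by independence; this is where the depth of the escapes is used, to
separate the kept paths from each other. So the balls of radius `2ℓ - 3` shatter `A` in `G[S]`.
-/

section Ball

variable {G : SimpleGraph V} {x y z : V} {m n : ℕ}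

theorem mem_gball : y ∈ gball G x n ↔ G.edist x y ≤ n :=
  Iff.rfl

theorem mem_gball_iff_exists_walk : y ∈ gball G x n ↔ ∃ p : G.Walk x y, p.length ≤ n := by
  constructor
  · intro h
    obtain ⟨p, hp⟩ := exists_walk_of_edist_ne_top (ne_top_of_le_ne_top (ENat.natCast_ne_top n) h)
    exact ⟨p, Nat.cast_le.mp (hp.trans_le h)⟩
  · rintro ⟨p, hp⟩
    exact (edist_le p).trans (Nat.cast_le.mpr hp)

theorem mem_gball_self : x ∈ gball G x n :=
  mem_gball_iff_exists_walk.mpr ⟨.nil, n.zero_le⟩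

theorem mem_gball_comm : y ∈ gball G x n ↔ x ∈ gball G y n := by
  simp only [mem_gball, edist_comm]

theorem mem_gball_trans (hxy : y ∈ gball G x m) (hyz : z ∈ gball G y n) :
    z ∈ gball G x (m + n) := by
  obtain ⟨p, hp⟩ := mem_gball_iff_exists_walk.mp hxy
  obtain ⟨q, hq⟩ := mem_gball_iff_exists_walk.mp hyz
  exact mem_gball_iff_exists_walk.mpr
    ⟨p.append q, (p.length_append q).trans_le (Nat.add_le_add hp hq)⟩

theorem gball_mono (h : m ≤ n) : gball G x m ⊆ gball G x n :=
  fun _ hy => le_trans (mem_gball.mp hy) (Nat.cast_le.mpr h)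

theorem mem_gball_one : y ∈ gball G x 1 ↔ G.Adj x y ∨ x = y := by
  simp only [mem_gball, Nat.cast_one, edist_le_one_iff_adj_or_eq]

theorem mem_gball_zero : y ∈ gball G x 0 ↔ x = y := by
  simp only [mem_gball, Nat.cast_zero, nonpos_iff_eq_zero, edist_eq_zero_iff]

theorem dist_le_of_mem_gball (h : y ∈ gball G x n) : G.dist x y ≤ n := by
  obtain ⟨p, hp⟩ := mem_gball_iff_exists_walk.mp h
  exact (dist_le p).trans hp

theorem mem_gball_of_mem_gball_induce {S : Set V} {x y : S} (h : y ∈ gball (G.induce S) x n) :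
    (y : V) ∈ gball G x n := by
  obtain ⟨p, hp⟩ := mem_gball_iff_exists_walk.mp h
  exact mem_gball_iff_exists_walk.mpr
    ⟨p.map (Embedding.induce S).toHom, (p.length_map _).trans_le hp⟩

theorem mem_gball_induce_one_iff {S : Set V} {x y : S} :
    y ∈ gball (G.induce S) x 1 ↔ (y : V) ∈ gball G x 1 := by
  simp only [mem_gball_one, comap_adj, Function.Embedding.subtype_apply, Subtype.ext_iff]

theorem exists_adj_boundary_of_mem_gball {T : Set V} (hx : x ∈ T) (hy : y ∉ T)
    (h : y ∈ gball G x n) :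
    ∃ u ∈ T, ∃ v ∉ T, G.Adj u v ∧
      ∃ i j, i + j ≤ n ∧ v ∈ gball G x i ∧ y ∈ gball G v j := by
  classical
  obtain ⟨p, hp⟩ := mem_gball_iff_exists_walk.mp h
  obtain ⟨e, he, hu, hv⟩ := p.exists_boundary_dart T hx hy
  have hs := p.dart_snd_mem_support_of_mem_darts he
  have hlen := congrArg Walk.length (p.take_spec hs)
  rw [Walk.length_append] at hlen
  exact ⟨e.fst, hu, e.snd, hv, e.adj, _, _, hlen.trans_le hp,
    mem_gball_iff_exists_walk.mpr ⟨p.takeUntil _ hs, le_rfl⟩,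
    mem_gball_iff_exists_walk.mpr ⟨p.dropUntil _ hs, le_rfl⟩⟩

theorem getVert_add_mem_gball (p : G.Walk x y) (i k : ℕ) :
    p.getVert (i + k) ∈ gball G (p.getVert i) k := by
  induction k with
  | zero => exact mem_gball_self
  | succ k ih =>
    refine mem_gball_trans ih (mem_gball_one.mpr ?_)
    rcases lt_or_ge (i + k) p.length with hlt | hge
    · exact .inl (p.adj_getVert_succ hlt)
    · exact .inr <| (p.getVert_of_length_le hge).trans
        (p.getVert_of_length_le (hge.trans (Nat.le_succ _))).symm

theorem getVert_mem_gball_getVert (p : G.Walk x y) (i j : ℕ) :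
    p.getVert j ∈ gball G (p.getVert i) (i - j + (j - i)) := by
  rcases le_total i j with hij | hij
  · simpa [hij] using getVert_add_mem_gball p i (j - i)
  · simpa [hij, mem_gball_comm] using getVert_add_mem_gball p j (i - j)

theorem getVert_mem_gball_start (p : G.Walk x y) (i : ℕ) : p.getVert i ∈ gball G x i := by
  simpa using getVert_mem_gball_getVert p 0 i

theorem end_mem_gball_getVert (p : G.Walk x y) {i : ℕ} (hi : i ≤ p.length) :
    y ∈ gball G (p.getVert i) (p.length - i) := by
  simpa [hi] using getVert_mem_gball_getVert p i p.length

theorem le_of_getVert_mem_gball (p : G.Walk x y) (hp : p.length = G.dist x y) {i : ℕ}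
    (hi : i ≤ p.length) (h : p.getVert i ∈ gball G x m) : i ≤ m := by
  have := dist_le_of_mem_gball (mem_gball_trans h (end_mem_gball_getVert p hi))
  omega

theorem lt_add_of_notMem_gball_getVert (p : G.Walk x y) {c i r : ℕ}
    (hz : z ∉ gball G (p.getVert c) r) (h : z ∈ gball G (p.getVert i) m) :
    r < c - i + (i - c) + m := by
  by_contra! hle
  exact hz (gball_mono hle (mem_gball_trans (getVert_mem_gball_getVert p c i) h))

theorem bShattered_range {ι : Type*} {f : ι → V}
    (h : ∀ Z : Set ι, ∃ v k, ∀ a, f a ∈ gball G v k ↔ a ∈ Z) : BShattered G (Set.range f) := by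
  intro Y hY
  obtain ⟨v, k, hvk⟩ := h (f ⁻¹' Y)
  refine ⟨v, k, Set.Subset.antisymm ?_ ?_⟩
  · rintro _ ⟨hball, a, rfl⟩
    exact (hvk a).mp hball
  · intro y hy
    obtain ⟨a, rfl⟩ := hY hy
    exact ⟨(hvk a).mpr hy, a, rfl⟩

end Ball

section System

variable {G : SimpleGraph V} {ι κ : Type*} {s : ι → V} {t : κ → V} {ℓ : ℕ}

/-- The ends of a system of paths from `s a` to `t b`, `(a, b) ∈ ι × κ`, other than the two ends of
its path of index `(a, b)`. -/
def otherEnds (s : ι → V) (t : κ → V) (a : ι) (b : κ) : Set V :=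
  s '' {a}ᶜ ∪ t '' {b}ᶜ

theorem left_mem_otherEnds {a a' : ι} (h : a' ≠ a) (b : κ) : s a' ∈ otherEnds s t a b :=
  .inl ⟨a', h, rfl⟩

theorem right_mem_otherEnds (a : ι) {b b' : κ} (h : b' ≠ b) : t b' ∈ otherEnds s t a b :=
  .inr ⟨b', h, rfl⟩

/-- The metric content of an independent pair: shortest paths `w a b`, with lengths between `ℓ + 1`
and `2 * ℓ - 7`, whose critical vertices are at distance more than `ℓ` from all other ends. The
pair is indexed, so that passing to subsets of `A` and `B` is a reindexing. -/
structure IsIndependentSystem (ℓ : ℕ) (w : ∀ a b, G.Walk (s a) (t b)) : Prop where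
  length_eq_dist : ∀ a b, (w a b).length = G.dist (s a) (t b)
  lt_length : ∀ a b, ℓ < (w a b).length
  length_add_seven_le : ∀ a b, (w a b).length + 7 ≤ 2 * ℓ
  notMem_gball_left : ∀ a b, ∀ x ∈ otherEnds s t a b, x ∉ gball G ((w a b).getVert (ℓ - 3)) ℓ
  notMem_gball_right : ∀ a b, ∀ x ∈ otherEnds s t a b,
    x ∉ gball G ((w a b).getVert ((w a b).length - (ℓ - 3))) ℓ

/-- An arc of the deep escape graph of `b`. By independence, a deep escape for `b` starts on the
path to `b`, at distance at most `ℓ - 5` from its beginning; the edge may degenerate here to a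
single vertex. -/
def DeepArc (ℓ : ℕ) (w : ∀ a b, G.Walk (s a) (t b)) (b : κ) (a a' : ι) : Prop :=
  ∃ i j, i + 5 ≤ ℓ ∧ j ≤ (w a' b).length ∧ (w a' b).getVert j ∈ gball G ((w a b).getVert i) 1

/-- An independent system of paths whose deep escape graphs are semicomplete, the form in which
the escape property is used. -/
structure IsEscapeSystem (ℓ : ℕ) (w : ∀ a b, G.Walk (s a) (t b)) : Prop
    extends IsIndependentSystem ℓ w where
  deepArc_or_deepArc : ∀ b a a', a ≠ a' → DeepArc ℓ w b a a' ∨ DeepArc ℓ w b a' a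

variable {w : ∀ a b, G.Walk (s a) (t b)} {a a' : ι} {b b' : κ} {i j e m : ℕ} {x : V}

theorem IsEscapeSystem.comp (h : IsEscapeSystem ℓ w) {ι' κ' : Type*} (f : ι' ↪ ι) (g : κ' ↪ κ) :
    IsEscapeSystem (s := s ∘ f) (t := t ∘ g) ℓ fun a b => w (f a) (g b) := by
  have hsub : ∀ a b, otherEnds (s ∘ f) (t ∘ g) a b ⊆ otherEnds s t (f a) (g b) := by
    rintro a b _ (⟨a', ha', rfl⟩ | ⟨b', hb', rfl⟩)
    · exact left_mem_otherEnds (f.injective.ne ha') _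
    · exact right_mem_otherEnds _ (g.injective.ne hb')
  exact {
    length_eq_dist := fun a b => h.length_eq_dist _ _
    lt_length := fun a b => h.lt_length _ _
    length_add_seven_le := fun a b => h.length_add_seven_le _ _
    notMem_gball_left := fun a b x hx => h.notMem_gball_left _ _ x (hsub a b hx)
    notMem_gball_right := fun a b x hx => h.notMem_gball_right _ _ x (hsub a b hx)
    deepArc_or_deepArc := fun b a a' hne => h.deepArc_or_deepArc _ _ _ (f.injective.ne hne) }

namespace IsIndependentSystem

theorem eight_le (h : IsIndependentSystem ℓ w) (a : ι) (b : κ) : 8 ≤ ℓ := by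
  have := h.lt_length a b
  have := h.length_add_seven_le a b
  omega

theorem length_le_add (h : IsIndependentSystem ℓ w) (hj : j ≤ (w a' b).length)
    (hij : (w a' b).getVert j ∈ gball G ((w a b).getVert i) e) :
    (w a b).length ≤ i + e + ((w a' b).length - j) := by
  rw [h.length_eq_dist]
  exact dist_le_of_mem_gball <| mem_gball_trans
    (mem_gball_trans (getVert_mem_gball_start _ i) hij) (end_mem_gball_getVert _ hj)

theorem index_add_four_le (h : IsIndependentSystem ℓ w) (hx : x ∈ otherEnds s t a b)
    (hi : i ≤ ℓ - 3) (hxi : x ∈ gball G ((w a b).getVert i) m) : i + 4 ≤ m := by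
  have := lt_add_of_notMem_gball_getVert _ (h.notMem_gball_left a b x hx) hxi
  have := h.eight_le a b
  omega

theorem length_sub_index_add_four_le (h : IsIndependentSystem ℓ w)
    (hx : x ∈ otherEnds s t a b) (hi : i ≤ (w a b).length) (hi' : (w a b).length - i ≤ ℓ - 3)
    (hxi : x ∈ gball G ((w a b).getVert i) m) : (w a b).length - i + 4 ≤ m := by
  have := lt_add_of_notMem_gball_getVert _ (h.notMem_gball_right a b x hx) hxi
  have := h.lt_length a b
  have := h.eight_le a b
  omega

theorem two_mul_le_index_add (h : IsIndependentSystem ℓ w) (hx : x ∈ otherEnds s t a b)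
    (hi : ℓ - 3 ≤ i) (hxi : x ∈ gball G ((w a b).getVert i) m) : 2 * ℓ ≤ i + m + 2 := by
  have := lt_add_of_notMem_gball_getVert _ (h.notMem_gball_left a b x hx) hxi
  have := h.eight_le a b
  omega

theorem min_index_add_four_le (h : IsIndependentSystem ℓ w) (hx : x ∈ otherEnds s t a b)
    (hi : i ≤ (w a b).length) (hxi : x ∈ gball G ((w a b).getVert i) m) :
    min i ((w a b).length - i) + 4 ≤ m := by
  have := h.length_add_seven_le a b
  rcases le_total i (ℓ - 3) with hle | hle
  · exact (Nat.add_le_add_right (min_le_left _ _) 4).trans (h.index_add_four_le hx hle hxi)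
  · exact (Nat.add_le_add_right (min_le_right _ _) 4).trans
      (h.length_sub_index_add_four_le hx hi (by omega) hxi)

theorem notMem_gball_of_le (h : IsIndependentSystem ℓ w) (ha : a ≠ a') (hi : i ≤ ℓ - 3)
    (hj : j ≤ ℓ - 3) (he : e ≤ 3) :
    (w a' b').getVert j ∉ gball G ((w a b).getVert i) e := by
  intro hij
  have := h.index_add_four_le (left_mem_otherEnds ha.symm b) hi <|
    mem_gball_trans hij (mem_gball_comm.mp (getVert_mem_gball_start _ j))
  have := h.index_add_four_le (left_mem_otherEnds ha b') hj <|
    mem_gball_trans (mem_gball_comm.mp hij) (mem_gball_comm.mp (getVert_mem_gball_start _ i))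
  omega

theorem notMem_gball_of_length_sub_le (h : IsIndependentSystem ℓ w) (hb : b ≠ b')
    (hi : i ≤ (w a b).length) (hj : j ≤ (w a' b').length) (hi' : (w a b).length - i ≤ ℓ - 3)
    (hj' : (w a' b').length - j ≤ ℓ - 3) (he : e ≤ 3) :
    (w a' b').getVert j ∉ gball G ((w a b).getVert i) e := by
  intro hij
  have := h.length_sub_index_add_four_le (right_mem_otherEnds a hb.symm) hi hi' <|
    mem_gball_trans hij (end_mem_gball_getVert _ hj)
  have := h.length_sub_index_add_four_le (right_mem_otherEnds a' hb) hj hj' <|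
    mem_gball_trans (mem_gball_comm.mp hij) (end_mem_gball_getVert _ hi)
  omega

theorem right_eq_of_mem_gball_one (h : IsIndependentSystem ℓ w) (ha : a ≠ a')
    (hi : i ≤ (w a b).length) (hj : j ≤ (w a' b').length)
    (hij : (w a' b').getVert j ∈ gball G ((w a b).getVert i) 1) : b = b' := by
  by_contra hb
  have hji := mem_gball_comm.mp hij
  have := h.min_index_add_four_le (left_mem_otherEnds ha.symm b) hi
    (mem_gball_trans hij (mem_gball_comm.mp (getVert_mem_gball_start _ j)))
  have := h.min_index_add_four_le (right_mem_otherEnds a (Ne.symm hb)) hi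
    (mem_gball_trans hij (end_mem_gball_getVert _ hj))
  have := h.min_index_add_four_le (left_mem_otherEnds ha b') hj
    (mem_gball_trans hji (mem_gball_comm.mp (getVert_mem_gball_start _ i)))
  have := h.min_index_add_four_le (right_mem_otherEnds a' hb) hj
    (mem_gball_trans hji (end_mem_gball_getVert _ hi))
  omega

theorem left_injective [Nonempty κ] (h : IsIndependentSystem ℓ w) : Function.Injective s := by
  intro a a' haa'
  by_contra ha
  obtain ⟨b⟩ := ‹Nonempty κ›
  have := h.index_add_four_le (left_mem_otherEnds (Ne.symm ha) b) (Nat.zero_le _) (m := 0)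
    (by simp only [Walk.getVert_zero, mem_gball_zero, haa'])
  omega

theorem left_ne_right (h : IsIndependentSystem ℓ w) (a : ι) (b : κ) : s a ≠ t b := by
  intro hab
  have := h.lt_length a b
  simp only [h.length_eq_dist, hab, dist_self, not_lt_zero] at this

theorem length_add_two_le_of_deepArc (h : IsIndependentSystem ℓ w) (ha : a ≠ a')
    (harc : DeepArc ℓ w b a a') : (w a b).length + 2 ≤ (w a' b).length := by
  obtain ⟨i, j, hi, hj, hij⟩ := harc
  have hjℓ : ¬ j ≤ ℓ - 3 := fun hj' =>
    h.notMem_gball_of_le ha (by omega) hj' (by norm_num) hij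
  have := h.length_le_add hj hij
  omega

end IsIndependentSystem

theorem IsEscapeSystem.deepArc_of_length_le (h : IsEscapeSystem ℓ w) (ha : a ≠ a')
    (hle : (w a b).length ≤ (w a' b).length) : DeepArc ℓ w b a a' := by
  refine (h.deepArc_or_deepArc b a a' ha).resolve_right fun harc => ?_
  have := h.length_add_two_le_of_deepArc ha.symm harc
  omega

/-- The vertex of index `j` of the path from `a'` to `b` is in or next to the root section of
`a ≠ a'`, more precisely its part on the path from `a` to `b`, which suffices by independence. -/
def Touches (ℓ : ℕ) (w : ∀ a b, G.Walk (s a) (t b)) (b : κ) (a a' : ι) (j : ℕ) : Prop :=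
  a ≠ a' ∧ ∃ i ≤ ℓ - 3, (w a' b).getVert j ∈ gball G ((w a b).getVert i) 1

theorem Touches.lt_index (hT : Touches ℓ w b a a' j) (h : IsIndependentSystem ℓ w) :
    ℓ - 3 < j := by
  obtain ⟨ha, i, hi, hij⟩ := hT
  by_contra! hj
  exact h.notMem_gball_of_le ha hi hj (by norm_num) hij

theorem Touches.length_lt (hT : Touches ℓ w b a a' j) (h : IsEscapeSystem ℓ w)
    (hj : j ≤ (w a' b).length) : (w a b).length < (w a' b).length := by
  have hlt := hT.lt_index h.toIsIndependentSystem
  obtain ⟨ha, i, hi, hij⟩ := hT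
  have hle := h.length_le_add hj hij
  have := h.length_add_two_le_of_deepArc ha (h.deepArc_of_length_le (b := b) ha (by omega))
  omega

end System

section KeptSubgraph

variable {G : SimpleGraph V} {ι : Type*} {s : ι → V} {t : Finset ι → V} {ℓ : ℕ}
  {w : ∀ a b, G.Walk (s a) (t b)} {a k k' : ι} {b : Finset ι} {i j j' m n : ℕ}

/-- The index `j` of the path from `k` to `b` is not beyond the first vertex of this path which
touches the root section of a member of `b`. Here the right ends are indexed by sets of left ends,
those which the shattering argument has to make close to `b`. -/
def Kept (ℓ : ℕ) (w : ∀ a b, G.Walk (s a) (t b)) (b : Finset ι) (k : ι) (j : ℕ) : Prop :=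
  j ≤ (w k b).length ∧ ∀ n < j, ∀ a ∈ b, ¬ Touches ℓ w b a k n

/-- The vertices of the induced subgraph in which the left ends are shattered: for each `b`, those
of the kept parts of the paths from the members of `b`. -/
def keptSet (ℓ : ℕ) (w : ∀ a b, G.Walk (s a) (t b)) : Set V :=
  {v | ∃ b, ∃ k ∈ b, ∃ j, Kept ℓ w b k j ∧ v = (w k b).getVert j}

theorem kept_of_le (h : IsIndependentSystem ℓ w) (hj : j ≤ ℓ - 3) : Kept ℓ w b k j := by
  have := h.lt_length k b
  refine ⟨by omega, fun n hn a _ hT => ?_⟩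
  have := hT.lt_index h
  omega

theorem kept_succ (hj : Kept ℓ w b k j) (hlt : j < (w k b).length)
    (hT : ∀ a ∈ b, ¬ Touches ℓ w b a k j) : Kept ℓ w b k (j + 1) := by
  refine ⟨hlt, fun n hn => ?_⟩
  rcases Nat.lt_succ_iff_lt_or_eq.mp hn with hn | rfl
  · exact hj.2 n hn
  · exact hT

theorem Kept.le_of_touches (hj : Kept ℓ w b k j) (ha : a ∈ b) (hT : Touches ℓ w b a k n) :
    j ≤ n := by
  by_contra! hlt
  exact hj.2 n hlt a ha hT

theorem left_mem_keptSet (h : IsIndependentSystem ℓ w) (ha : a ∈ b) : s a ∈ keptSet ℓ w :=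
  ⟨b, a, ha, 0, kept_of_le h (Nat.zero_le _), ((w a b).getVert_zero).symm⟩

/-- A bound on the distance from the vertex of index `j` of the path from `k` to `b` in the kept
subgraph: the rest of the path, and two units for each shorter path to which one may switch. -/
def potential (w : ∀ a b, G.Walk (s a) (t b)) (b : Finset ι) (k : ι) (j : ℕ) : ℕ :=
  (w k b).length - j + 2 * {c ∈ b | (w c b).length < (w k b).length}.card

theorem potential_lt_of_touched (h : IsEscapeSystem ℓ w) (hj : j ≤ (w k b).length) (ha : a ∈ b)
    (hne : a ≠ k) (hi : i ≤ ℓ - 3)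
    (hij : (w k b).getVert j ∈ gball G ((w a b).getVert i) 1) :
    potential w b a i < potential w b k j := by
  have hlt := Touches.length_lt ⟨hne, i, hi, hij⟩ h hj
  have hcard : {c ∈ b | (w c b).length < (w a b).length}.card <
      {c ∈ b | (w c b).length < (w k b).length}.card := by
    refine Finset.card_lt_card (Finset.ssubset_iff_of_subset ?_ |>.mpr ⟨a, ?_, ?_⟩)
    · exact Finset.monotone_filter_right b fun _ _ hc => lt_trans hc hlt
    · exact Finset.mem_filter.mpr ⟨ha, hlt⟩
    · exact fun hmem => lt_irrefl (w a b).length (Finset.mem_filter.mp hmem).2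
  have := h.length_le_add hj hij
  unfold potential
  omega

theorem Kept.exists_mem_gball_one_potential_lt (hj : Kept ℓ w b k j) (h : IsEscapeSystem ℓ w)
    (hk : k ∈ b) (hlt : j < (w k b).length) :
    ∃ k' ∈ b, ∃ j', Kept ℓ w b k' j' ∧
      (w k' b).getVert j' ∈ gball G ((w k b).getVert j) 1 ∧
        potential w b k' j' < potential w b k j := by
  by_cases hT : ∃ a ∈ b, Touches ℓ w b a k j
  · obtain ⟨a, ha, hne, i, hi, hij⟩ := hT
    exact ⟨a, ha, i, kept_of_le h.toIsIndependentSystem hi, mem_gball_comm.mp hij,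
      potential_lt_of_touched h hj.1 ha hne hi hij⟩
  · push Not at hT
    refine ⟨k, hk, j + 1, kept_succ hj hlt hT, getVert_add_mem_gball _ j 1, ?_⟩
    unfold potential
    omega

theorem Kept.exists_mem_gball_induce (h : IsEscapeSystem ℓ w) {x : keptSet ℓ w}
    (hj : Kept ℓ w b k j) (hk : k ∈ b) (hx : (x : V) = (w k b).getVert j)
    (hn : potential w b k j ≤ n) :
    ∃ y : keptSet ℓ w, (y : V) = t b ∧ y ∈ gball (G.induce (keptSet ℓ w)) x n := by
  induction n generalizing k j x with
  | zero =>
    have hj' : (w k b).length ≤ j := by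
      unfold potential at hn
      omega
    exact ⟨x, hx.trans ((w k b).getVert_of_length_le hj'), mem_gball_self⟩
  | succ n ih =>
    rcases hj.1.eq_or_lt with rfl | hlt
    · exact ⟨x, hx.trans (w k b).getVert_length, mem_gball_self⟩
    obtain ⟨k', hk', j', hj', hnear, hpot⟩ := hj.exists_mem_gball_one_potential_lt h hk hlt
    let z : keptSet ℓ w := ⟨(w k' b).getVert j', b, k', hk', j', hj', rfl⟩
    obtain ⟨y, hy, hyz⟩ := ih (x := z) hj' hk' rfl (by omega)
    have hxz : z ∈ gball (G.induce (keptSet ℓ w)) x 1 :=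
      mem_gball_induce_one_iff.mpr (hx ▸ hnear)
    exact ⟨y, hy, add_comm n 1 ▸ mem_gball_trans hxz hyz⟩

theorem potential_zero_add_two_le [Fintype ι] (hk : k ∈ b) :
    potential w b k 0 + 2 ≤ (w k b).length + 2 * Fintype.card ι := by
  have hcard : {c ∈ b | (w c b).length < (w k b).length}.card < Fintype.card ι :=
    (Finset.card_lt_card (Finset.filter_ssubset.mpr ⟨k, hk, lt_irrefl (w k b).length⟩)).trans_le
      b.card_le_univ
  unfold potential
  omega

/-- The root section of `a` within the kept subgraph. -/
def keptRoot (ℓ : ℕ) (w : ∀ a b, G.Walk (s a) (t b)) (a : ι) : Set V :=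
  {v | ∃ b, a ∈ b ∧ ∃ i ≤ ℓ - 3, v = (w a b).getVert i}

/-- The parts beyond their root sections of the kept paths which touch the root section of `a`. -/
def touchingTails (ℓ : ℕ) (w : ∀ a b, G.Walk (s a) (t b)) (a : ι) : Set V :=
  {v | ∃ b, a ∈ b ∧ ∃ k ∈ b, (∃ n, Kept ℓ w b k n ∧ Touches ℓ w b a k n) ∧
    ∃ j, Kept ℓ w b k j ∧ ℓ - 3 < j ∧ v = (w k b).getVert j}

/-- The region around `s a` which a walk of the kept subgraph has to leave in order to reach a
right end `t b` with `a ∉ b`. -/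
def trap (ℓ : ℕ) (w : ∀ a b, G.Walk (s a) (t b)) (a : ι) : Set V :=
  keptRoot ℓ w a ∪ touchingTails ℓ w a

/-- The vertices through which a walk of the kept subgraph can leave the trap of `a`: those beyond
the root section on a path from `a`, and the critical vertices of the other paths to ends `t b`
with `a ∈ b`. -/
def exitSet (ℓ : ℕ) (w : ∀ a b, G.Walk (s a) (t b)) (a : ι) : Set V :=
  {v | ∃ b, a ∈ b ∧ ((∃ j ≤ (w a b).length, ℓ - 3 < j ∧ v = (w a b).getVert j) ∨
    ∃ k ≠ a, v = (w k b).getVert (ℓ - 3))}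

theorem mem_exitSet_of_notMem_keptRoot {q : V} (ha : a ∈ b) (hj : Kept ℓ w b a j)
    (hq : q = (w a b).getVert j) (hroot : q ∉ keptRoot ℓ w a) : q ∈ exitSet ℓ w a :=
  ⟨b, ha, .inl ⟨j, hj.1, lt_of_not_ge fun hle => hroot ⟨b, ha, j, hle, hq⟩, hq⟩⟩

theorem mem_exitSet_of_adj_keptRoot (h : IsIndependentSystem ℓ w) {z q : V}
    (hz : z ∈ keptRoot ℓ w a) (hq : q ∈ keptSet ℓ w) (hqT : q ∉ trap ℓ w a) (hzq : G.Adj z q) :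
    q ∈ exitSet ℓ w a := by
  obtain ⟨b, ha, i, hi, rfl⟩ := hz
  obtain ⟨b', k, hk, j, hj, hqj⟩ := hq
  rcases eq_or_ne a k with rfl | hne
  · exact mem_exitSet_of_notMem_keptRoot hk hj hqj fun hroot => hqT (.inl hroot)
  have hij : (w k b').getVert j ∈ gball G ((w a b).getVert i) 1 :=
    hqj ▸ mem_gball_one.mpr (.inl hzq)
  have := h.lt_length a b
  obtain rfl := h.right_eq_of_mem_gball_one hne (by omega) hj.1 hij
  have hT : Touches ℓ w b a k j := ⟨hne, i, hi, hij⟩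
  exact absurd (.inr ⟨b, ha, k, hk, ⟨j, hj, hT⟩, j, hj, hT.lt_index h, hqj⟩) hqT

-- The deep escape from `a` to `k` starts early, so it ends where `P_{kb}` is still far from `b`.
theorem Kept.length_add_index_add_four_le (hj : Kept ℓ w b k j) (h : IsEscapeSystem ℓ w)
    (ha : a ∈ b) (hne : a ≠ k) (hle : (w a b).length ≤ (w k b).length) :
    (w a b).length + j + 4 ≤ (w k b).length + ℓ := by
  obtain ⟨i, n, hi, hn, hin⟩ := h.deepArc_of_length_le hne hle
  have := hj.le_of_touches ha ⟨hne, i, by omega, hin⟩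
  have := h.length_le_add hn hin
  omega

theorem Kept.getVert_notMem_gball_one_of_lt (hj : Kept ℓ w b k j) (h : IsEscapeSystem ℓ w)
    (hj' : Kept ℓ w b k' j') (hk : k ∈ b) (hk' : k' ∈ b) (hne : k ≠ k') (hlt : ℓ - 3 < j)
    (hlt' : ℓ - 3 < j') : (w k' b).getVert j' ∉ gball G ((w k b).getVert j) 1 := by
  intro hnear
  have := hj.1
  have := hj'.1
  have := h.length_le_add hj'.1 hnear
  have := h.length_le_add hj.1 (mem_gball_comm.mp hnear)
  rcases le_total (w k b).length (w k' b).length with hle | hle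
  · have := hj'.length_add_index_add_four_le h hk hne hle
    omega
  · have := hj.length_add_index_add_four_le h hk' hne.symm hle
    omega

theorem Kept.getVert_notMem_gball_one_of_touches (hj : Kept ℓ w b k j)
    (h : IsIndependentSystem ℓ w) (ha : a ∈ b) (hk' : k' ∈ b) (hak' : a ≠ k') (hne : k ≠ k')
    (hn : Kept ℓ w b k n) (hT : Touches ℓ w b a k n) (hj' : j' ≤ ℓ - 3) :
    (w k' b).getVert j' ∉ gball G ((w k b).getVert j) 1 := by
  intro hnear
  have hT' : Touches ℓ w b k' k j := ⟨hne.symm, j', hj', mem_gball_comm.mp hnear⟩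
  obtain rfl := le_antisymm (hj.le_of_touches ha hT) (hn.le_of_touches hk' hT')
  obtain ⟨-, i, hi, hij⟩ := hT
  exact h.notMem_gball_of_le hak' hi hj' (by norm_num) (mem_gball_trans hij hnear)

theorem mem_exitSet_of_adj_touchingTails (h : IsEscapeSystem ℓ w) {z q : V}
    (hz : z ∈ touchingTails ℓ w a) (hq : q ∈ keptSet ℓ w) (hqT : q ∉ trap ℓ w a)
    (hzq : G.Adj z q) : q ∈ exitSet ℓ w a := by
  obtain ⟨b, ha, k, hk, htouch, j, hj, hlt, rfl⟩ := hz
  obtain ⟨b', k', hk', j', hj', hqj⟩ := hq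
  obtain ⟨n, hn, hT⟩ := htouch
  rcases eq_or_ne a k' with rfl | hak'
  · exact mem_exitSet_of_notMem_keptRoot hk' hj' hqj fun hroot => hqT (.inl hroot)
  have hnear : (w k' b').getVert j' ∈ gball G ((w k b).getVert j) 1 :=
    hqj ▸ mem_gball_one.mpr (.inl hzq)
  rcases eq_or_ne k k' with rfl | hne
  · have hle : j ≤ j' + 1 := le_of_getVert_mem_gball _ (h.length_eq_dist k b) hj.1 <|
      mem_gball_trans (getVert_mem_gball_start (w k b') j') (mem_gball_comm.mp hnear)
    obtain rfl : b = b' := by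
      by_contra hb
      have := h.length_add_seven_le k b
      have := h.length_add_seven_le k b'
      exact h.notMem_gball_of_length_sub_le hb hj.1 hj'.1 (by omega) (by omega) (by norm_num) hnear
    have hj'ℓ : j' = ℓ - 3 := le_antisymm
      (le_of_not_gt fun hlt' => hqT (.inr ⟨b, ha, k, hk, ⟨n, hn, hT⟩, j', hj', hlt', hqj⟩))
      (by omega)
    exact ⟨b, ha, .inr ⟨k, hak'.symm, hj'ℓ ▸ hqj⟩⟩
  · obtain rfl := h.right_eq_of_mem_gball_one hne hj.1 hj'.1 hnear
    rcases le_or_gt j' (ℓ - 3) with hle | hlt'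
    · exact absurd hnear (hj.getVert_notMem_gball_one_of_touches h.toIsIndependentSystem ha hk'
        hak' hne hn hT hle)
    · exact absurd hnear (hj.getVert_notMem_gball_one_of_lt h hj' hk hk' hne hlt hlt')

theorem two_mul_le_of_mem_exitSet (h : IsIndependentSystem ℓ w) {q : V}
    (hq : q ∈ exitSet ℓ w a) (hab : a ∉ b) (hm : q ∈ gball G (s a) m) (hn : t b ∈ gball G q n) :
    2 * ℓ ≤ m + n + 2 := by
  obtain ⟨b', ha, hq⟩ := hq
  have hb : b ≠ b' := fun hb => hab (hb ▸ ha)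
  rcases hq with ⟨j, hjle, hj, rfl⟩ | ⟨k, hk, rfl⟩
  · have := le_of_getVert_mem_gball _ (h.length_eq_dist a b') hjle hm
    have := h.two_mul_le_index_add (right_mem_otherEnds a hb) hj.le hn
    omega
  · have := h.two_mul_le_index_add (left_mem_otherEnds hk.symm b') le_rfl (mem_gball_comm.mp hm)
    have := h.two_mul_le_index_add (right_mem_otherEnds k hb) le_rfl hn
    omega

theorem right_notMem_trap (h : IsIndependentSystem ℓ w) (hab : a ∉ b) : t b ∉ trap ℓ w a := by
  rintro (⟨b', -, i, hi, hb⟩ | ⟨b', ha, k, -, -, j, hj, hlt, hb⟩)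
  · have := dist_le_of_mem_gball (hb ▸ getVert_mem_gball_start (w a b') i)
    have := h.lt_length a b
    rw [h.length_eq_dist] at this
    omega
  · have hbb' : b ≠ b' := fun hbb' => hab (hbb' ▸ ha)
    have := h.two_mul_le_index_add (right_mem_otherEnds k hbb') hlt.le
      (mem_gball_zero.mpr hb.symm)
    have := h.length_add_seven_le k b'
    have := hj.1
    omega

theorem two_mul_le_of_mem_gball_induce (h : IsEscapeSystem ℓ w) (hab : a ∉ b)
    {x y : keptSet ℓ w} (hx : (x : V) = s a) (hy : (y : V) = t b)
    (hxy : y ∈ gball (G.induce (keptSet ℓ w)) x n) : 2 * ℓ ≤ n + 2 := by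
  have hxT : (x : V) ∈ trap ℓ w a :=
    .inl ⟨{a}, Finset.mem_singleton_self a, 0, Nat.zero_le _, by rw [hx, Walk.getVert_zero]⟩
  have hyT : (y : V) ∉ trap ℓ w a := hy ▸ right_notMem_trap h.toIsIndependentSystem hab
  obtain ⟨z, hz, q, hq, hzq, i, j, hn, hi, hj⟩ :=
    exists_adj_boundary_of_mem_gball (T := Subtype.val ⁻¹' trap ℓ w a) hxT hyT hxy
  have hexit : (q : V) ∈ exitSet ℓ w a := hz.elim
    (fun hroot => mem_exitSet_of_adj_keptRoot h.toIsIndependentSystem hroot q.2 hq hzq)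
    (fun htail => mem_exitSet_of_adj_touchingTails h htail q.2 hq hzq)
  have := two_mul_le_of_mem_exitSet h.toIsIndependentSystem hexit hab
    (hx ▸ mem_gball_of_mem_gball_induce hi) (hy ▸ mem_gball_of_mem_gball_induce hj)
  omega

theorem bShattered_keptSet [Fintype ι] [Nonempty ι] (h : IsEscapeSystem ℓ w)
    (hlen : ∀ a b, (w a b).length + 2 * Fintype.card ι + 1 ≤ 2 * ℓ) {σ : ι → keptSet ℓ w}
    (hσ : ∀ a, (σ a : V) = s a) : BShattered (G.induce (keptSet ℓ w)) (Set.range σ) := by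
  classical
  have hnear : ∀ (b : Finset ι), ∀ a ∈ b,
      ∃ y : keptSet ℓ w, (y : V) = t b ∧ y ∈ gball (G.induce _) (σ a) (2 * ℓ - 3) := by
    intro b a ha
    have := potential_zero_add_two_le (w := w) ha
    have := hlen a b
    exact (kept_of_le h.toIsIndependentSystem (Nat.zero_le _)).exists_mem_gball_induce h ha
      (by rw [hσ, Walk.getVert_zero]) (by omega)
  refine bShattered_range fun Z => ?_
  rcases Z.eq_empty_or_nonempty with rfl | ⟨a₀, ha₀⟩
  · obtain ⟨y, hy, -⟩ := hnear Finset.univ (Classical.arbitrary ι) (Finset.mem_univ _)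
    refine ⟨y, 0, fun a => iff_of_false (fun hmem => ?_) (Set.notMem_empty a)⟩
    exact h.left_ne_right a Finset.univ
      ((hσ a).symm.trans ((congrArg _ (mem_gball_zero.mp hmem).symm).trans hy))
  obtain ⟨y, hy, -⟩ := hnear Z.toFinset a₀ (Set.mem_toFinset.mpr ha₀)
  refine ⟨y, 2 * ℓ - 3, fun a => ⟨fun hmem => ?_, fun ha => ?_⟩⟩
  · by_contra ha
    have := two_mul_le_of_mem_gball_induce h (Set.mem_toFinset.not.mpr ha) (hσ a) hy
      (mem_gball_comm.mp hmem)
    have := h.eight_le a ∅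
    omega
  · obtain ⟨y', hy', hmem⟩ := hnear Z.toFinset a (Set.mem_toFinset.mpr ha)
    obtain rfl : y' = y := Subtype.ext (hy'.trans hy.symm)
    exact mem_gball_comm.mp hmem

theorem IsEscapeSystem.card_le_of_distVCdimLE [Fintype ι] (h : IsEscapeSystem ℓ w) {d : ℕ}
    (hlen : ∀ a b, (w a b).length + 2 * Fintype.card ι + 1 ≤ 2 * ℓ) (hvc : distVCdimLE G d) :
    Fintype.card ι ≤ d := by
  rcases isEmpty_or_nonempty ι with _ | _
  · exact (Fintype.card_eq_zero (α := ι)).trans_le d.zero_le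
  let σ (a : ι) : keptSet ℓ w :=
    ⟨s a, left_mem_keptSet h.toIsIndependentSystem (Finset.mem_univ a)⟩
  have hσ : Function.Injective σ := fun a a' haa' =>
    h.left_injective (congrArg Subtype.val haa')
  calc Fintype.card ι = (Set.range σ).ncard := by
        rw [Set.ncard_range_of_injective hσ, Nat.card_eq_fintype_card]
    _ ≤ d := hvc _ _ (bShattered_keptSet h hlen fun _ => rfl)

end KeptSubgraph

section Pair

variable {G : SimpleGraph V} {ℓ d : ℕ} {A B : Finset V} {P : V → V → List V} {x y : V} {n : ℕ}

theorem getD_support_start (p : G.Walk x y) (hn : n ≤ p.length) :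
    p.support.getD n x = p.getVert n := by
  rw [List.getD_eq_getElem _ _ (by rw [p.length_support]; omega), p.getVert_eq_support_getElem hn]

theorem critA_eq_getVert (p : G.Walk x y) (hp : p.support = P x y) (hℓ : ℓ - 3 ≤ p.length) :
    critA ℓ P x y = p.getVert (ℓ - 3) := by
  rw [critA, ← hp, getD_support_start p hℓ]

theorem precritA_eq_getVert (p : G.Walk x y) (hp : p.support = P x y) (hℓ : ℓ - 4 ≤ p.length) :
    precritA ℓ P x y = p.getVert (ℓ - 4) := by
  rw [precritA, ← hp, getD_support_start p hℓ]

theorem critB_eq_getVert (p : G.Walk x y) (hp : p.support = P x y) (hℓ : 3 ≤ ℓ) :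
    critB ℓ P x y = p.getVert (p.length - (ℓ - 3)) := by
  have hindex : p.support.length - (ℓ - 2) = p.length - (ℓ - 3) := by
    rw [p.length_support]
    omega
  rw [critB, ← hp, hindex, getD_support_start p (Nat.sub_le _ _)]

theorem IsMinPath.length_eq_dist [LinearOrder (Sym2 V)] {p : G.Walk x y} (hp : IsMinPath G p) :
    p.length = G.dist x y := by
  obtain ⟨q, hq⟩ := p.reachable.exists_walk_length_eq_dist
  exact le_antisymm (hq ▸ hp.2.1 q) (dist_le p)

theorem DLocalizedPair.lt_dist (h : DLocalizedPair G ℓ d A B) (hx : x ∈ A) (hy : y ∈ B)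
    (hxy : G.Reachable x y) : ℓ < G.dist x y := by
  have hne : x ≠ y := fun hne => Finset.disjoint_left.mp h.1 hx (hne ▸ hy)
  have hle := h.2.1 x (.inl hx) y (.inr hy) hne
  rw [← hxy.coe_dist_eq_edist] at hle
  exact_mod_cast hle

theorem DLocalizedPair.dist_add_le (h : DLocalizedPair G ℓ d A B) (hx : x ∈ A) (hy : y ∈ B)
    (hxy : G.Reachable x y) : G.dist x y + 2 ^ (d + 2) + 3 ≤ 2 * ℓ := by
  have hle := h.2.2 x hx y hy
  rw [← hxy.coe_dist_eq_edist] at hle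
  exact_mod_cast hle

theorem DLocalizedPair.otherEnds_subset (h : DLocalizedPair G ℓ d A B) (a : A) (b : B) :
    otherEnds (Subtype.val : A → V) (Subtype.val : B → V) a b ⊆
      ((A : Set V) ∪ B) \ {(a : V), (b : V)} := by
  have hne : ∀ (a : A) (b : B), (a : V) ≠ b := fun a b =>
    Finset.disjoint_iff_ne.mp h.1 a a.2 b b.2
  rintro _ (⟨a', ha', rfl⟩ | ⟨b', hb', rfl⟩)
  · exact ⟨.inl a'.2, fun hx => hx.elim (fun haa' => ha' (Subtype.ext haa')) (hne a' b)⟩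
  · exact ⟨.inr b'.2, fun hx => hx.elim (fun hba => hne a b' hba.symm)
      (fun hbb' => hb' (Subtype.ext hbb'))⟩

variable {w : ∀ (a : A) (b : B), G.Walk (a : V) b}

theorem IndependentPair.isIndependentSystem (h : IndependentPair G ℓ d A B P)
    (hlen : ∀ a b, (w a b).length = G.dist a b) (hsupp : ∀ a b, (w a b).support = P a b) :
    IsIndependentSystem ℓ w := by
  have hlt : ∀ a b, ℓ < (w a b).length := fun a b =>
    hlen a b ▸ h.1.lt_dist a.2 b.2 (w a b).reachable
  have hle : ∀ a b, (w a b).length + 7 ≤ 2 * ℓ := fun a b => by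
    have := h.1.dist_add_le a.2 b.2 (w a b).reachable
    have := hlen a b
    have : 2 ^ 2 ≤ 2 ^ (d + 2) := Nat.pow_le_pow_right two_pos (Nat.le_add_left 2 d)
    omega
  refine ⟨hlen, hlt, hle, fun a b x hx hball => ?_, fun a b x hx hball => ?_⟩
  · have := hlt a b
    rw [← critA_eq_getVert (w a b) (hsupp a b) (by omega)] at hball
    obtain ⟨hAB, hab⟩ := h.1.otherEnds_subset a b hx
    exact hab ((h.2 a a.2 b b.2).1.subset ⟨hball, hAB⟩)
  · have := hlt a b
    have := hle a b
    rw [← critB_eq_getVert (w a b) (hsupp a b) (by omega)] at hball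
    obtain ⟨hAB, hab⟩ := h.1.otherEnds_subset a b hx
    exact hab ((h.2 a a.2 b b.2).2.subset ⟨hball, hAB⟩)

theorem IsDeepEscape.exists_eq_getVert (h : IsIndependentSystem ℓ w)
    (hsupp : ∀ a b, (w a b).support = P a b) {a : A} {u v : V}
    (hesc : IsDeepEscape G ℓ A B P a u v) : ∃ b i, i + 5 ≤ ℓ ∧ u = (w a b).getVert i := by
  obtain ⟨⟨-, ⟨b, hb, hu⟩, -⟩, hdeep⟩ := hesc
  lift b to B using hb
  obtain ⟨hcrit, hprecrit⟩ := hdeep a a.2 b b.2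
  have := h.eight_le a b
  have := h.lt_length a b
  rw [critA_eq_getVert _ (hsupp a b) (by omega)] at hcrit
  rw [precritA_eq_getVert _ (hsupp a b) (by omega)] at hprecrit
  rw [← hsupp a b, show ℓ - 2 = ℓ - 3 + 1 by omega, ← Walk.support_take] at hu
  obtain ⟨i, rfl, -⟩ := Walk.mem_support_iff_exists_getVert.mp hu
  rw [Walk.take_getVert] at hcrit hprecrit ⊢
  refine ⟨b, _, ?_, rfl⟩
  have := ne_of_apply_ne _ hcrit
  have := ne_of_apply_ne _ hprecrit
  omega

theorem DeepEscapeArc.deepArc (h : IsIndependentSystem ℓ w)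
    (hsupp : ∀ a b, (w a b).support = P a b) {a a' : A} {b : B}
    (harc : DeepEscapeArc G ℓ A B P b a a') : DeepArc ℓ w b a a' := by
  obtain ⟨-, -, u, v, hesc, hne, hv⟩ := harc
  obtain ⟨b', i, hi, rfl⟩ := hesc.exists_eq_getVert h hsupp
  rw [← hsupp a' b] at hv
  obtain ⟨j, rfl, hj⟩ := Walk.mem_support_iff_exists_getVert.mp hv
  have hij := mem_gball_one.mpr (.inl hesc.1.1)
  have := h.lt_length a b'
  obtain rfl := h.right_eq_of_mem_gball_one (fun haa' => hne (congrArg _ haa'.symm)) (by omega)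
    hj hij
  exact ⟨i, j, hi, hj, hij⟩

end Pair

theorem stmt17_general (d ℓ : ℕ) {V : Type*} (G : SimpleGraph V) (hvc : distVCdimLE G d)
    (A B : Finset V) (P : V → V → List V)
    (hP : ∀ a ∈ A, ∀ b ∈ B, ∃ w : G.Walk a b, w.length = G.dist a b ∧ w.support = P a b)
    (hind : IndependentPair G ℓ d A B P)
    (hesc : ∀ b ∈ B, ∀ a ∈ A, ∀ a' ∈ A, a ≠ a' →
      DeepEscapeArc G ℓ A B P b a a' ∨ DeepEscapeArc G ℓ A B P b a' a) :
    A.card ≤ d ∨ B.card < 2 ^ (d + 1) := by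
  by_contra! hcard
  have hpath (a : A) (b : B) := hP a a.2 b b.2
  choose w hlen hsupp using hpath
  have hsys := hind.isIndependentSystem hlen hsupp
  have hescape : IsEscapeSystem ℓ w := ⟨hsys, fun b a a' hne =>
    (hesc b b.2 a a.2 a' a'.2 (Subtype.coe_ne_coe.mpr hne)).imp
      (·.deepArc hsys hsupp) (·.deepArc hsys hsupp)⟩
  obtain ⟨f⟩ : Nonempty (Fin (d + 1) ↪ A) :=
    Function.Embedding.nonempty_of_card_le (by simpa using hcard.1)
  obtain ⟨g⟩ : Nonempty (Finset (Fin (d + 1)) ↪ B) :=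
    Function.Embedding.nonempty_of_card_le (by simpa using hcard.2)
  have hlength (a : Fin (d + 1)) (b : Finset (Fin (d + 1))) :
      (w (f a) (g b)).length + 2 * Fintype.card (Fin (d + 1)) + 1 ≤ 2 * ℓ := by
    have := hind.1.dist_add_le (f a).2 (g b).2 (w (f a) (g b)).reachable
    have : d + 1 < 2 ^ (d + 1) := Nat.lt_two_pow_self
    have : 2 ^ (d + 2) = 2 * 2 ^ (d + 1) := pow_succ' 2 (d + 1)
    rw [hlen, Fintype.card_fin]
    omega
  have hbound := (hescape.comp f g).card_le_of_distVCdimLE hlength hvc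
  rw [Fintype.card_fin] at hbound
  exact Nat.not_succ_le_self d hbound

/-- Lemma `finiz`: if `G` has distance VC-dimension at most `d`, then every
independent pair satisfying the escape property has size at most `2^{d+1} - 1`. -/
theorem stmt17 (d ℓ : ℕ) {V : Type*} [Fintype V] [LinearOrder (Sym2 V)]
    (G : SimpleGraph V) (hvc : distVCdimLE G d)
    (A B : Finset V) (P : V → V → List V)
    (hP : IsMinPathFamily G A B P)
    (hind : IndependentPair G ℓ d A B P)
    (hesc : EscapeProperty G ℓ A B P) :
    min A.card B.card ≤ 2 ^ (d + 1) - 1 := by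
  have hbound := stmt17_general d ℓ G hvc A B P
    (fun a ha b hb => (hP a ha b hb).imp fun _ hw => hw.imp_left IsMinPath.length_eq_dist) hind
    fun b hb a ha a' ha' hne => ((hesc b hb).1 a ha a' ha' hne).1
  have := (d + 1).lt_two_pow_self
  omega
end
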